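/- arXiv:2307.08661 — 4 statements merged into one kernel-verified Lean document; each statement's English description precedes it below -/
import Mathlib

section
/- Let D be a digraph, k a positive integer, and (V1, V2) a partition of its vertex set such that the number of arcs going from V1 to V2 is strictly less than k and the subdigraphs induced by V1 and by V2 each have dichromatic number at most k. Then χ⃗(D) ≤ k. As a consequence, every digraph D satisfies χ⃗(D) ≤ λ(D) + 1. -/
/-!
Two ideas carry the proof.

*Colour shifts.* Given `k`-dicolourings of the two sides, add a constant `s : Fin k` to the
colours of `V2`. A monochromatic cycle that is not inside one side uses a monochromatic arc from
`V1` to `V2`, and each such arc is monochromatic for exactly one `s`. With fewer than `k` such arcs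
some shift makes none of them monochromatic (`dichrom_le_of_cut`).

*Menger's theorem.* If `K = λ(D)` and `u ≠ v`, then some cut separating `u` from `v` has at most
`K` arcs, so induction on the number of vertices and the first part give a `(K + 1)`-dicolouring
(`dichrom_le_of_not_pack`). The arc form of Menger's theorem (`menger`) is proved by growing a
path from `u` one arc at a time, deleting the arcs used, and keeping the following invariant for
the current end `x` of the path: every cut `S` (with `u ∈ S`, `v ∉ S`) is left by at least `m + [x
∈ S]` of the remaining arcs, `m` being the number of further paths still to be found. By
submodularity, the tight cuts avoiding `x` (those left by exactly `m` arcs) have a largest member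
`T`, if there are any; comparing the cuts `T` and `T ∪ {x}` yields an arc from `x` to a vertex
outside `T`, and following that arc preserves the invariant. When no tight cut avoids `x`, the
partial path can be discarded and a new one started from `u` in the smaller digraph.
-/

def GoodColouring {V : Type} (A : V → V → Prop) {k : ℕ} (φ : V → Fin k) : Prop :=
  ∀ c : Fin k, ∀ v : V, φ v = c →
    ¬ Relation.TransGen (fun a b => A a b ∧ φ a = c ∧ φ b = c) v v

noncomputable def dichrom {V : Type} (A : V → V → Prop) : ℕ :=
  sInf {k : ℕ | ∃ φ : V → Fin k, GoodColouring A φ}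

/-- `l` is a directed path from `u` to `v` (a list of distinct vertices with consecutive
arcs, starting at `u` and ending at `v`). -/
def IsDipathList {V : Type} (A : V → V → Prop) (u v : V) (l : List V) : Prop :=
  l.Nodup ∧ List.Chain' A l ∧ l.head? = some u ∧ l.getLast? = some v

/-- `λ(u,v)`: maximum number of pairwise arc-disjoint directed paths from `u` to `v`. -/
noncomputable def localArcConn {V : Type} (A : V → V → Prop) (u v : V) : ℕ :=
  sSup {n : ℕ | ∃ P : Fin n → List V, (∀ i, IsDipathList A u v (P i)) ∧
    ∀ i j, i ≠ j → ∀ p : V × V, p ∈ (P i).zip (P i).tail → p ∉ (P j).zip (P j).tail}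

/-- `λ(D)`: maximum of `λ(u,v)` over ordered pairs of distinct vertices. -/
noncomputable def maxLocalArcConn {V : Type} (A : V → V → Prop) : ℕ :=
  sSup {n : ℕ | ∃ u v : V, u ≠ v ∧ n = localArcConn A u v}

/-! ### Colourings and arc cuts -/

open Relation in
theorem goodColouring_of_injective {V : Type} (A : V → V → Prop) (hirr : ∀ a, ¬ A a a) {k : ℕ}
    (φ : V → Fin k) (hφ : Function.Injective φ) : GoodColouring A φ := by
  intro c v _ h
  obtain ⟨b, ⟨hA, h1, h2⟩, _⟩ := TransGen.head'_iff.1 h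
  exact hirr b (by rwa [hφ (h1.trans h2.symm)] at hA)

theorem exists_colouring_of_dichrom_le {V : Type} [Finite V] (A : V → V → Prop)
    (hirr : ∀ a, ¬ A a a) {k : ℕ} (h : dichrom A ≤ k) :
    ∃ φ : V → Fin k, GoodColouring A φ := by
  have hne : {k : ℕ | ∃ φ : V → Fin k, GoodColouring A φ}.Nonempty :=
    ⟨Nat.card V, Finite.equivFin V, goodColouring_of_injective A hirr _ (Equiv.injective _)⟩
  obtain ⟨φ, hφ⟩ := Nat.sInf_mem hne
  refine ⟨fun v => Fin.castLE h (φ v), fun c v hv hc => ?_⟩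
  refine hφ (φ v) v rfl (Relation.TransGen.mono ?_ _ _ hc)
  rintro a b ⟨hA, h1, h2⟩
  exact ⟨hA, Fin.castLE_injective h (h1.trans hv.symm), Fin.castLE_injective h (h2.trans hv.symm)⟩

theorem dichrom_le_of_colouring {V : Type} {A : V → V → Prop} {k : ℕ} (φ : V → Fin k)
    (hφ : GoodColouring A φ) : dichrom A ≤ k := Nat.sInf_le ⟨φ, hφ⟩

theorem transGen_subtype_of_forward {V : Type} {R : V → V → Prop} {S : Set V}
    (hS : ∀ a b, R a b → a ∈ S → b ∈ S) {v w : V} (hv : v ∈ S) (h : Relation.TransGen R v w) :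
    ∃ hw : w ∈ S, Relation.TransGen (fun a b : S => R a b) ⟨v, hv⟩ ⟨w, hw⟩ := by
  induction h with
  | single h => exact ⟨hS _ _ h hv, .single h⟩
  | tail _ h ih =>
    obtain ⟨hb, ih⟩ := ih
    exact ⟨hS _ _ h hb, .tail ih h⟩

theorem transGen_subtype_of_backward {V : Type} {R : V → V → Prop} {S : Set V}
    (hS : ∀ a b, R a b → b ∈ S → a ∈ S) {v w : V} (hw : w ∈ S) (h : Relation.TransGen R v w) :
    ∃ hv : v ∈ S, Relation.TransGen (fun a b : S => R a b) ⟨v, hv⟩ ⟨w, hw⟩ := by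
  obtain ⟨hv, h'⟩ := transGen_subtype_of_forward (R := Function.swap R) (S := S)
    (fun a b h hb => hS b a h hb) hw (Relation.transGen_swap.2 h)
  exact ⟨hv, Relation.transGen_swap.1 h'⟩

/-- The first half of the theorem, by shifting the colours of one side. -/
theorem dichrom_le_of_cut {V : Type} [Fintype V] (A : V → V → Prop) (hirr : ∀ a, ¬ A a a)
    (k : ℕ) (hk : 0 < k) (V1 V2 : Set V) (hun : V1 ∪ V2 = Set.univ) (hdis : Disjoint V1 V2)
    (hcut : {p : V × V | A p.1 p.2 ∧ p.1 ∈ V1 ∧ p.2 ∈ V2}.ncard < k)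
    (h1 : dichrom (fun a b : V1 => A a.1 b.1) ≤ k)
    (h2 : dichrom (fun a b : V2 => A a.1 b.1) ≤ k) : dichrom A ≤ k := by
  classical
  have : NeZero k := ⟨hk.ne'⟩
  obtain ⟨φ1, hφ1⟩ := exists_colouring_of_dichrom_le _ (fun a => hirr a.1) h1
  obtain ⟨φ2, hφ2⟩ := exists_colouring_of_dichrom_le _ (fun a => hirr a.1) h2
  set f1 : V → Fin k := fun x => if h : x ∈ V1 then φ1 ⟨x, h⟩ else 0 with hf1
  set f2 : V → Fin k := fun x => if h : x ∈ V2 then φ2 ⟨x, h⟩ else 0 with hf2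
  -- A shift that is the colour difference of no arc from `V1` to `V2`.
  obtain ⟨s, hs⟩ : ∃ s : Fin k, s ∉ (fun p : V × V => f1 p.1 - f2 p.2) ''
      {p : V × V | A p.1 p.2 ∧ p.1 ∈ V1 ∧ p.2 ∈ V2} := by
    by_contra! hall
    have himg := Set.ncard_image_le (f := fun p : V × V => f1 p.1 - f2 p.2)
      (Set.toFinite {p : V × V | A p.1 p.2 ∧ p.1 ∈ V1 ∧ p.2 ∈ V2})
    rw [Set.eq_univ_of_forall hall, Set.ncard_univ, Nat.card_fin] at himg
    omega
  have hor : ∀ x, x ∈ V1 ∨ x ∈ V2 := fun x => by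
    have : x ∈ V1 ∪ V2 := hun ▸ Set.mem_univ x
    exact this
  have hnot : ∀ x, x ∈ V2 → x ∉ V1 := fun x hx2 hx1 => Set.disjoint_left.1 hdis hx1 hx2
  set φ : V → Fin k := fun x => if x ∈ V1 then f1 x else f2 x + s with hφ
  have e1 : ∀ x : V1, φ x = φ1 x := fun x => by simp [hφ, hf1]
  have e2 : ∀ x : V2, φ x = φ2 x + s := fun x => by simp [hφ, hf2, hnot x x.2]
  refine dichrom_le_of_colouring φ fun c v hv hcyc => ?_
  have hno : ∀ a b, (A a b ∧ φ a = c ∧ φ b = c) → a ∈ V1 → b ∉ V2 := by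
    rintro a b ⟨hA, ha, hb⟩ ha1 hb2
    refine hs ⟨(a, b), ⟨hA, ha1, hb2⟩, ?_⟩
    have : φ a = φ b := ha.trans hb.symm
    simp only [hφ, if_pos ha1, if_neg (hnot b hb2)] at this
    simp [this]
  rcases hor v with hv1 | hv2
  · obtain ⟨_, h⟩ := transGen_subtype_of_forward (S := V1)
      (fun a b h ha => (hor b).resolve_right (hno a b h ha)) hv1 hcyc
    refine hφ1 c ⟨v, hv1⟩ ((e1 ⟨v, hv1⟩).symm.trans hv) (Relation.TransGen.mono ?_ _ _ h)
    rintro a b ⟨hA, ha, hb⟩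
    exact ⟨hA, (e1 a).symm.trans ha, (e1 b).symm.trans hb⟩
  · obtain ⟨_, h⟩ := transGen_subtype_of_backward (S := V2)
      (fun a b h hb => (hor a).resolve_left fun ha => hno a b h ha hb) hv2 hcyc
    refine hφ2 (c - s) ⟨v, hv2⟩ (eq_sub_of_add_eq ((e2 ⟨v, hv2⟩).symm.trans hv))
      (Relation.TransGen.mono ?_ _ _ h)
    rintro a b ⟨hA, ha, hb⟩
    exact ⟨hA, eq_sub_of_add_eq ((e2 a).symm.trans ha), eq_sub_of_add_eq ((e2 b).symm.trans hb)⟩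

/-! ### Menger's theorem for arcs -/

/-- `v` can be reached from `x` along arcs of `Q`. -/
def ArcReach {V : Type} (Q : Finset (V × V)) (x v : V) : Prop :=
  Relation.ReflTransGen (fun a b => (a, b) ∈ Q) x v

/-- The arc set `F` contains `n` pairwise disjoint subsets, each of which connects `u` to `v`;
equivalently, `n` pairwise arc-disjoint directed paths from `u` to `v`. -/
def ArcPack {V : Type} (u v : V) (F : Finset (V × V)) (n : ℕ) : Prop :=
  ∃ P : Fin n → Finset (V × V), (∀ i, P i ⊆ F) ∧ (∀ i j, i ≠ j → Disjoint (P i) (P j)) ∧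
    ∀ i, ArcReach (P i) u v

/-- The number of arcs of `F` leaving `S`. -/
def cutSize {V : Type} [DecidableEq V] (F : Finset (V × V)) (S : Finset V) : ℕ :=
  (F.filter fun p => p.1 ∈ S ∧ p.2 ∉ S).card

section Menger

variable {V : Type} [DecidableEq V]

omit [DecidableEq V] in
theorem ArcPack.mono {u v : V} {F G : Finset (V × V)} {n : ℕ} (h : ArcPack u v F n)
    (hFG : F ⊆ G) : ArcPack u v G n := by
  obtain ⟨P, h1, h2⟩ := h
  exact ⟨P, fun i => (h1 i).trans hFG, h2⟩

theorem ArcPack.cons {u v : V} {F Q : Finset (V × V)} {n : ℕ} (hQ : Q ⊆ F)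
    (hr : ArcReach Q u v) (h : ArcPack u v (F \ Q) n) : ArcPack u v F (n + 1) := by
  obtain ⟨P, h1, h2, h3⟩ := h
  have hd : ∀ i, Disjoint Q (P i) := fun i =>
    Finset.disjoint_of_subset_right (h1 i) Finset.disjoint_sdiff
  refine ⟨Fin.cons Q P, ?_, ?_, ?_⟩
  · intro i
    refine Fin.cases ?_ (fun i => ?_) i
    · simpa using hQ
    · simpa using (h1 i).trans Finset.sdiff_subset
  · intro i j
    refine Fin.cases ?_ (fun i => ?_) i <;> refine Fin.cases ?_ (fun j => ?_) j
    · simp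
    · exact fun _ => hd j
    · exact fun _ => (hd i).symm
    · intro hij
      simpa using h2 i j (fun e => hij (by rw [e]))
  · intro i
    refine Fin.cases ?_ (fun i => ?_) i
    · simpa using hr
    · simpa using h3 i

theorem cutSize_submodular (F : Finset (V × V)) (S T : Finset V) :
    cutSize F (S ∪ T) + cutSize F (S ∩ T) ≤ cutSize F S + cutSize F T := by
  simp only [cutSize, Finset.card_filter, ← Finset.sum_add_distrib]
  refine Finset.sum_le_sum fun p _ => ?_
  by_cases a : p.1 ∈ S <;> by_cases b : p.1 ∈ T <;> by_cases c : p.2 ∈ S <;>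
    by_cases d : p.2 ∈ T <;> simp [a, b, c, d]

theorem cutSize_erase (F : Finset (V × V)) (S : Finset V) {x y : V} (hxy : (x, y) ∈ F) :
    cutSize (F.erase (x, y)) S + (if x ∈ S ∧ y ∉ S then 1 else 0) = cutSize F S := by
  simp only [cutSize, Finset.card_filter]
  rw [← Finset.sum_erase_add F _ hxy]

/-- One step of the path-growing argument: the end of the path moves from `x` to `y` and the arc
`xy` is deleted. Here `m` further paths from `u` remain to be found, and the hypothesis `hy` says
that `y` lies in no tight cut avoiding `x`. -/
theorem cut_invariant_step {u v x y : V} {F : Finset (V × V)} {m : ℕ} (hxy : (x, y) ∈ F)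
    (hF : ∀ S : Finset V, u ∈ S → v ∉ S → m + (if x ∈ S then 1 else 0) ≤ cutSize F S)
    (hy : ∀ S : Finset V, u ∈ S → v ∉ S → x ∉ S → cutSize F S = m → y ∉ S) :
    ∀ S : Finset V, u ∈ S → v ∉ S →
      m + (if y ∈ S then 1 else 0) ≤ cutSize (F.erase (x, y)) S := by
  intro S hu hv
  have h1 := cutSize_erase F S hxy
  have h2 := hF S hu hv
  have h3 := hy S hu hv
  by_cases hx : x ∈ S <;> by_cases hyS : y ∈ S <;> simp [hx, hyS] at h1 h2 h3 ⊢ <;> omega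

/-- The conclusion of the path-growing argument pulls back along the arc `xy`. -/
theorem pack_step {u v x y : V} {F : Finset (V × V)} {m : ℕ} (hxy : (x, y) ∈ F)
    (h : (∃ Q ⊆ F.erase (x, y), ArcReach Q y v ∧ ArcPack u v (F.erase (x, y) \ Q) m) ∨
      ArcPack u v (F.erase (x, y)) (m + 1)) :
    (∃ Q ⊆ F, ArcReach Q x v ∧ ArcPack u v (F \ Q) m) ∨ ArcPack u v F (m + 1) := by
  rcases h with ⟨Q, hQ, hr, hp⟩ | h
  · refine Or.inl ⟨insert (x, y) Q, ?_, ?_, hp.mono ?_⟩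
    · exact Finset.insert_subset hxy (hQ.trans (Finset.erase_subset _ _))
    · exact .head (Finset.mem_insert_self _ _)
        (Relation.ReflTransGen.mono (fun a b hab => Finset.mem_insert_of_mem hab) _ _ hr)
    · intro p
      simp only [Finset.mem_sdiff, Finset.mem_erase, Finset.mem_insert]
      tauto
  · exact Or.inr (h.mono (Finset.erase_subset _ _))

/-- The path-growing argument. The second alternative of the conclusion covers the case in which
the partial path ending at `x` is discarded. -/
theorem menger_aux [Fintype V] {u v : V} (huv : u ≠ v) (n : ℕ) :
    ∀ (F : Finset (V × V)), F.card = n → ∀ (m : ℕ) (x : V),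
      (∀ S : Finset V, u ∈ S → v ∉ S → m + (if x ∈ S then 1 else 0) ≤ cutSize F S) →
      (∃ Q ⊆ F, ArcReach Q x v ∧ ArcPack u v (F \ Q) m) ∨ ArcPack u v F (m + 1) := by
  induction n using Nat.strong_induction_on with
  | _ n ih =>
    intro F hFn
    have ih' : ∀ x y : V, (x, y) ∈ F → ∀ m : ℕ, (∀ S : Finset V, u ∈ S → v ∉ S →
        m + (if y ∈ S then 1 else 0) ≤ cutSize (F.erase (x, y)) S) →
        (∃ Q ⊆ F, ArcReach Q x v ∧ ArcPack u v (F \ Q) m) ∨ ArcPack u v F (m + 1) := by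
      intro x y hxy m h
      refine pack_step hxy (ih _ ?_ _ rfl m y h)
      rw [← hFn]
      exact Finset.card_erase_lt_of_mem hxy
    -- The case `x = u`: no cut avoids `u`, so any arc leaving `u` can be followed.
    have hstart : ∀ m : ℕ, (∀ S : Finset V, u ∈ S → v ∉ S → m + 1 ≤ cutSize F S) →
        ArcPack u v F (m + 1) := by
      intro m h
      have hpos := h {u} (by simp) (by simpa using huv.symm)
      obtain ⟨⟨a, y⟩, hp⟩ := Finset.card_pos.1 (lt_of_lt_of_le (Nat.succ_pos m) hpos)
      simp only [Finset.mem_filter, Finset.mem_singleton] at hp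
      obtain ⟨hp, rfl, _⟩ := hp
      have hinv := cut_invariant_step (u := a) (v := v) (m := m) hp
        (fun S hu hv => by simpa [hu] using h S hu hv) (fun S hu _ hx => absurd hu hx)
      rcases ih' a y hp m hinv with ⟨Q, hQ, hr, hpk⟩ | h
      · exact ArcPack.cons hQ hr hpk
      · exact h
    intro m x hx
    by_cases hxv : x = v
    · subst hxv
      refine Or.inl ⟨∅, by simp, .refl, ?_⟩
      rw [Finset.sdiff_empty]
      cases m with
      | zero => exact ⟨fun _ => ∅, by simp, fun i => i.elim0, fun i => i.elim0⟩
      | succ m => exact hstart m fun S hu hv => (Nat.le_add_right _ _).trans (hx S hu hv)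
    let tight : Finset (Finset V) :=
      Finset.univ.filter fun S => u ∈ S ∧ v ∉ S ∧ x ∉ S ∧ cutSize F S = m
    by_cases hne : tight.Nonempty
    · obtain ⟨T, hT, hmax⟩ := tight.exists_max_image Finset.card hne
      simp only [tight, Finset.mem_filter, Finset.mem_univ, true_and] at hT hmax
      obtain ⟨huT, hvT, hxT, hTm⟩ := hT
      -- `T ∪ {x}` is left by more arcs than `T`, and the extra ones start at `x`.
      obtain ⟨y, hxy, hyT⟩ : ∃ y, (x, y) ∈ F ∧ y ∉ T := by
        by_contra! hall
        have h1 := hx (insert x T) (by simp [huT]) (by simp [hvT, Ne.symm hxv])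
        have h2 : cutSize F (insert x T) ≤ cutSize F T := by
          refine Finset.card_le_card fun p => ?_
          simp only [Finset.mem_filter, Finset.mem_insert, not_or]
          rintro ⟨hpF, h | h, _, h'⟩
          · exact absurd (hall p.2 (by rw [← h]; exact hpF)) h'
          · exact ⟨hpF, h, h'⟩
        simp at h1
        omega
      refine ih' x y hxy m (cut_invariant_step hxy hx fun S hu hv hxS hS hyS => hyT ?_)
      have hsub := cutSize_submodular F S T
      have hcap := hx (S ∩ T) (by simp [hu, huT]) (by simp [hv])
      have hcup := hx (S ∪ T) (by simp [hu]) (by simp [hv, hvT])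
      simp [hxS, hxT] at hcap hcup
      have hle := hmax (S ∪ T)
        ⟨by simp [hu], by simp [hv, hvT], by simp [hxS, hxT], by omega⟩
      rw [Finset.eq_of_subset_of_card_le Finset.subset_union_right hle]
      exact Finset.mem_union_left _ hyS
    · refine Or.inr (hstart m fun S hu hv => ?_)
      have h1 := hx S hu hv
      by_cases hxS : x ∈ S
      · simpa [hxS] using h1
      · have h2 : cutSize F S ≠ m := fun h => hne ⟨S, by simp [tight, hu, hv, hxS, h]⟩
        simp [hxS] at h1
        omega

/-- Menger's theorem, arc version. -/
theorem menger [Fintype V] {u v : V} (huv : u ≠ v) (F : Finset (V × V)) (n : ℕ)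
    (h : ∀ S : Finset V, u ∈ S → v ∉ S → n + 1 ≤ cutSize F S) : ArcPack u v F (n + 1) := by
  rcases menger_aux huv _ F rfl n u (fun S hu hv => by simpa [hu] using h S hu hv) with
    ⟨Q, hQ, hr, hp⟩ | h
  · exact ArcPack.cons hQ hr hp
  · exact h

end Menger

/-! ### Arc packings and local arc-connectivity -/

theorem exists_dipathList_of_arcReach {V : Type} {Q : Finset (V × V)} {u v : V}
    (h : ArcReach Q u v) : ∃ l, IsDipathList (fun a b => (a, b) ∈ Q) u v l := by
  induction h using Relation.ReflTransGen.head_induction_on with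
  | refl => exact ⟨[v], by simp, List.isChain_singleton _, rfl, rfl⟩
  | @head a c hac _ ih =>
    obtain ⟨l, hnd, hch, hhd, hlast⟩ := ih
    by_cases ha : a ∈ l
    -- A repeated vertex is removed by cutting the list back to its occurrence.
    · obtain ⟨s, t, rfl⟩ := List.append_of_mem ha
      exact ⟨a :: t, hnd.of_append_right, hch.right_of_append, rfl, by simpa using hlast⟩
    · cases l with
      | nil => simp at hhd
      | cons b t =>
        obtain rfl : b = c := by simpa using hhd
        exact ⟨a :: b :: t, List.nodup_cons.2 ⟨ha, hnd⟩, List.isChain_cons_cons.2 ⟨hac, hch⟩, rfl,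
          by simpa using hlast⟩

theorem rel_of_mem_zip_tail {V : Type} {R : V → V → Prop} {l : List V} (h : List.IsChain R l)
    {p : V × V} (hp : p ∈ l.zip l.tail) : R p.1 p.2 := by
  induction l with
  | nil => simp at hp
  | cons a t ih =>
    cases t with
    | nil => simp at hp
    | cons b t =>
      rw [List.isChain_cons_cons] at h
      simp only [List.tail_cons, List.zip_cons_cons, List.mem_cons] at hp
      rcases hp with rfl | hp
      · exact h.1
      · exact ih h.2 hp

theorem exists_mem_zip_tail {V : Type} {A : V → V → Prop} {u v : V} (huv : u ≠ v) {l : List V}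
    (h : IsDipathList A u v l) : ∃ p, p ∈ l.zip l.tail := by
  obtain ⟨_, _, hh, hl⟩ := h
  match l, hh, hl with
  | [a], hh, hl =>
    simp at hh hl
    exact absurd (hh.symm.trans hl) huv
  | a :: b :: t, _, _ => exact ⟨(a, b), by simp⟩

/-- The supremum defining `localArcConn` is a genuine maximum: disjoint paths between distinct
vertices use distinct arcs. -/
theorem bddAbove_localArcConn {V : Type} [Finite V] (A : V → V → Prop) {u v : V} (huv : u ≠ v) :
    BddAbove {n : ℕ | ∃ P : Fin n → List V, (∀ i, IsDipathList A u v (P i)) ∧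
      ∀ i j, i ≠ j → ∀ p : V × V, p ∈ (P i).zip (P i).tail → p ∉ (P j).zip (P j).tail} := by
  refine ⟨Nat.card (V × V), ?_⟩
  rintro n ⟨P, h1, h2⟩
  choose f hf using fun i => exists_mem_zip_tail huv (h1 i)
  have hinj : Function.Injective f := by
    intro i j hij
    by_contra hne
    exact h2 i j hne (f i) (hf i) (hij ▸ hf j)
  simpa using Nat.card_le_card_of_injective f hinj

theorem le_maxLocalArcConn_of_pack {V : Type} [Finite V] (A : V → V → Prop) {u v : V}
    (huv : u ≠ v) {F : Finset (V × V)} (hF : ∀ p ∈ F, A p.1 p.2) {n : ℕ}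
    (h : ArcPack u v F n) : n ≤ maxLocalArcConn A := by
  obtain ⟨P, h1, h2, h3⟩ := h
  choose L hL using fun i => exists_dipathList_of_arcReach (h3 i)
  have hn : n ≤ localArcConn A u v := by
    refine le_csSup (bddAbove_localArcConn A huv) ⟨L, fun i => ?_, fun i j hij p hi hj => ?_⟩
    · obtain ⟨a, b, c, d⟩ := hL i
      exact ⟨a, List.IsChain.imp (fun x y hxy => hF (x, y) (h1 i hxy)) b, c, d⟩
    · exact Finset.disjoint_left.1 (h2 i j hij) (rel_of_mem_zip_tail (hL i).2.1 hi)
        (rel_of_mem_zip_tail (hL j).2.1 hj)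
  refine hn.trans (le_csSup (Set.Finite.bddAbove ?_) ⟨u, v, huv, rfl⟩)
  refine (Set.finite_range fun p : V × V => localArcConn A p.1 p.2).subset ?_
  rintro n ⟨a, b, _, rfl⟩
  exact ⟨(a, b), rfl⟩

/-- Arc-disjoint paths in an induced subdigraph are arc-disjoint paths in the digraph. -/
theorem ArcPack.of_subtype {V : Type} {S : Set V} {u v : S} {F : Finset (S × S)} {n : ℕ}
    (h : ArcPack u v F n) :
    ArcPack u.1 v.1
      (F.map ((Function.Embedding.subtype _).prodMap (Function.Embedding.subtype _))) n := by
  obtain ⟨P, h1, h2, h3⟩ := h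
  refine ⟨fun i => (P i).map _, fun i => Finset.map_subset_map.2 (h1 i),
    fun i j hij => (Finset.disjoint_map _).2 (h2 i j hij), fun i => ?_⟩
  exact Relation.ReflTransGen.lift Subtype.val
    (fun a b hab => Finset.mem_map.2 ⟨(a, b), hab, rfl⟩) _ _ (h3 i)

/-! ### Dichromatic number and local arc-connectivity -/

/-- The second half of the theorem, by induction on the number of vertices. The hypothesis is
phrased through arc packings, so that it passes to induced subdigraphs. -/
theorem dichrom_le_of_not_pack (K n : ℕ) : ∀ (V : Type) [Fintype V] (A : V → V → Prop),
    (∀ a, ¬ A a a) → Fintype.card V = n →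
    (∀ (u v : V), u ≠ v → ∀ F : Finset (V × V), (∀ p ∈ F, A p.1 p.2) →
      ¬ ArcPack u v F (K + 1)) → dichrom A ≤ K + 1 := by
  induction n using Nat.strong_induction_on with
  | _ n ih =>
    intro V _ A hirr hn hpack
    classical
    by_cases hsub : Subsingleton V
    · exact dichrom_le_of_colouring (fun _ => 0)
        (goodColouring_of_injective A hirr _ (Function.injective_of_subsingleton _))
    rw [not_subsingleton_iff_nontrivial] at hsub
    obtain ⟨u, v, huv⟩ := exists_pair_ne V
    obtain ⟨S, hu, hv, hS⟩ : ∃ S : Finset V, u ∈ S ∧ v ∉ S ∧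
        cutSize (Finset.univ.filter fun p : V × V => A p.1 p.2) S < K + 1 := by
      by_contra! h
      exact hpack u v huv _ (by simp) (menger huv _ K h)
    have hind : ∀ (W : Set V) (w : V), w ∉ W →
        dichrom (fun a b : W => A a.1 b.1) ≤ K + 1 := by
      intro W w hw
      refine ih (Fintype.card W) (hn ▸ Fintype.card_subtype_lt (x := w) hw) W _
        (fun a => hirr a.1) rfl fun a b hab F hF hp => ?_
      refine hpack a.1 b.1 (fun h => hab (Subtype.ext h)) _ ?_ hp.of_subtype
      intro p hp
      obtain ⟨q, hq, rfl⟩ := Finset.mem_map.1 hp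
      exact hF q hq
    refine dichrom_le_of_cut A hirr (K + 1) K.succ_pos (S : Set V) (S : Set V)ᶜ
      (Set.union_compl_self _) disjoint_compl_right ?_ (hind _ v (by simpa using hv))
      (hind _ u (by simpa using hu))
    convert hS using 1
    rw [cutSize, ← Set.ncard_coe_finset]
    congr 1
    ext p
    simp

theorem stmt1 {V : Type} [Fintype V] (A : V → V → Prop) (hirr : Irreflexive A) :
    (∀ k : ℕ, 0 < k → ∀ V1 V2 : Set V, V1 ∪ V2 = Set.univ → Disjoint V1 V2 →
      {p : V × V | A p.1 p.2 ∧ p.1 ∈ V1 ∧ p.2 ∈ V2}.ncard < k →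
      dichrom (fun a b : V1 => A a.1 b.1) ≤ k →
      dichrom (fun a b : V2 => A a.1 b.1) ≤ k →
      dichrom A ≤ k) ∧
    dichrom A ≤ maxLocalArcConn A + 1 := by
  have hirr' : ∀ a, ¬ A a a := fun a => hirr a
  refine ⟨dichrom_le_of_cut A hirr', ?_⟩
  refine dichrom_le_of_not_pack _ _ V A hirr' rfl fun u v huv F hF hp => ?_
  have := le_maxLocalArcConn_of_pack A huv hF hp
  omega
end

section
/- Let k ≥ 1 and let D be a k-extremal digraph. Then: (i) D is Eulerian, i.e. every vertex of D has equal in- and out-degree; (ii) D is (k+1)-dicritical, i.e. χ⃗(D) = k + 1 and every proper subdigraph of D has dichromatic number at most k; and (iii) λ(u,v) = k for every ordered pair of distinct vertices u, v of D. -/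
noncomputable def outDeg {V : Type} (A : V → V → Prop) (v : V) : ℕ := {w | A v w}.ncard

noncomputable def inDeg {V : Type} (A : V → V → Prop) (v : V) : ℕ := {w | A w v}.ncard

def StronglyConnected {V : Type} (A : V → V → Prop) : Prop :=
  ∀ u v : V, Relation.ReflTransGen A u v

def UnderlyingConnected {V : Type} (A : V → V → Prop) : Prop :=
  Nonempty V ∧ ∀ u v : V, Relation.ReflTransGen (fun a b => A a b ∨ A b a) u v

/-- The underlying graph is connected and remains connected after deleting any one vertex. -/
def UnderlyingTwoConnected {V : Type} (A : V → V → Prop) : Prop :=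
  UnderlyingConnected A ∧
    ∀ x : V, UnderlyingConnected (fun a b : {v : V // v ≠ x} => A a.1 b.1)

/-- `D` is `k`-extremal: strongly connected, underlying graph `2`-connected, and
`χ⃗(D) = λ(D) + 1 = k + 1`. -/
def IsExtremal {V : Type} (A : V → V → Prop) (k : ℕ) : Prop :=
  StronglyConnected A ∧ UnderlyingTwoConnected A ∧
    dichrom A = k + 1 ∧ maxLocalArcConn A = k

namespace Extremal
variable {V : Type} [DecidableEq V]

/-! ### Cuts and net flow -/

/-- The number of arcs of `G` leaving the vertex set `X`; integer-valued so that it can be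
subtracted freely. -/
def cutOut (G : Finset (V × V)) (X : Finset V) : ℤ :=
  ∑ e ∈ G, if e.1 ∈ X ∧ e.2 ∉ X then 1 else 0

/-- The number of arcs of `G` with tail in `X` minus the number with head in `X`, that is,
out-arcs minus in-arcs of `X` (see `net_eq_sub`); arcs inside `X` cancel. -/
def net (G : Finset (V × V)) (X : Finset V) : ℤ :=
  ∑ e ∈ G, ((if e.1 ∈ X then 1 else 0) - (if e.2 ∈ X then 1 else 0))

lemma net_eq_sub [Fintype V] (G : Finset (V × V)) (X : Finset V) :
    net G X = cutOut G X - cutOut G Xᶜ := by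
  rw [net, cutOut, cutOut, ← Finset.sum_sub_distrib]
  refine Finset.sum_congr rfl fun e _ => ?_
  by_cases h1 : e.1 ∈ X <;> by_cases h2 : e.2 ∈ X <;> simp [h1, h2]

lemma cutOut_nonneg (G : Finset (V × V)) (X : Finset V) : 0 ≤ cutOut G X :=
  Finset.sum_nonneg fun e _ => by split_ifs <;> simp

/-- Submodularity of the cut function. -/
lemma cutOut_union_add_inter_le (G : Finset (V × V)) (X Y : Finset V) :
    cutOut G (X ∪ Y) + cutOut G (X ∩ Y) ≤ cutOut G X + cutOut G Y := by
  simp only [cutOut, ← Finset.sum_add_distrib]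
  refine Finset.sum_le_sum fun e _ => ?_
  by_cases h1 : e.1 ∈ X <;> by_cases h2 : e.2 ∈ X <;> by_cases h3 : e.1 ∈ Y <;>
    by_cases h4 : e.2 ∈ Y <;> simp [h1, h2, h3, h4]

lemma net_eq_sum (G : Finset (V × V)) (X : Finset V) : net G X = ∑ w ∈ X, net G {w} := by
  simp only [net]
  rw [Finset.sum_comm]
  refine Finset.sum_congr rfl fun e _ => ?_
  simp [Finset.sum_sub_distrib]

/-- If all arcs into `w` start in `M`, moving `w` into `M` saves the in-arcs of `w` and costs at most
its out-arcs. -/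
lemma cutOut_insert_le (G : Finset (V × V)) {M : Finset V} {w : V} (hw : w ∉ M)
    (h : ∀ e ∈ G, e.2 = w → e.1 ∈ M) :
    cutOut G (insert w M) ≤ cutOut G M + net G {w} := by
  simp only [cutOut, net, ← Finset.sum_add_distrib]
  refine Finset.sum_le_sum fun e he => ?_
  have h' := h e he
  by_cases h1 : e.1 = w <;> by_cases h2 : e.2 = w <;> by_cases h3 : e.1 ∈ M <;>
    by_cases h4 : e.2 ∈ M <;> simp_all

/-! ### Menger's theorem -/

/-- In an arc set that is minimal subject to every `u`-`v` cut having at least `N` arcs, each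
`u`-`v` cut still has `N` more arcs going out than coming in. The reason: every arc leaves a tight
cut, so no arc enters `u`, and uncrossing tight cuts shows that every vertex other than `u`, `v`
has at least as many out-arcs as in-arcs. -/
lemma le_net_of_minimal {G : Finset (V × V)} {u v : V} {N : ℤ} [Fintype V]
    (hG : Minimal (fun G : Finset (V × V) => ∀ X, u ∈ X → v ∉ X → N ≤ cutOut G X) G)
    {X : Finset V} (hu : u ∈ X) (hv : v ∉ X) : N ≤ net G X := by
  have tight : ∀ e ∈ G, ∃ Y : Finset V, u ∈ Y ∧ v ∉ Y ∧ e.1 ∈ Y ∧ e.2 ∉ Y ∧ cutOut G Y = N := by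
    intro e he
    by_contra! hcon
    refine absurd (hG.2 (y := G.erase e) ?_ (Finset.erase_subset _ _) he) (by simp)
    intro Y huY hvY
    have h1 : cutOut G Y = (if e.1 ∈ Y ∧ e.2 ∉ Y then 1 else 0) + cutOut (G.erase e) Y :=
      (Finset.add_sum_erase _ _ he).symm
    have h2 := hG.1 Y huY hvY
    have h3 := hcon Y huY hvY
    split_ifs at h1 with h
    · have := h3 h.1 h.2
      omega
    · omega
  have hin : ∀ e ∈ G, e.2 ≠ u := by
    intro e he h
    obtain ⟨Y, h1, _, _, h2, _⟩ := tight e he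
    exact h2 (h ▸ h1)
  have hnetu : N ≤ net G {u} := by
    have huv : v ∉ ({u} : Finset V) := by
      rw [Finset.mem_singleton]; rintro rfl; exact hv hu
    refine (hG.1 {u} (by simp) huv).trans ?_
    refine Finset.sum_le_sum fun e he => ?_
    have := hin e he
    by_cases h1 : e.1 = u <;> simp_all
  have hnet : ∀ w, w ≠ u → w ≠ v → 0 ≤ net G {w} := by
    intro w hwu hwv
    by_cases hex : ∃ e ∈ G, e.2 = w
    · obtain ⟨e, he, hew⟩ := hex
      obtain ⟨Y, huY, hvY, _, hwY, hY⟩ := tight e he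
      let T : Finset V → Prop := fun Y => u ∈ Y ∧ v ∉ Y ∧ w ∉ Y ∧ cutOut G Y = N
      have hTY : T Y := ⟨huY, hvY, hew ▸ hwY, hY⟩
      obtain ⟨M, -, hM⟩ := (Set.toFinite {Y | T Y}).exists_le_maximal hTY
      obtain ⟨huM, hvM, hwM, hMN⟩ := hM.1
      have hall : ∀ e ∈ G, e.2 = w → e.1 ∈ M := by
        intro e he hew
        obtain ⟨Z, huZ, hvZ, heZ, hwZ, hZ⟩ := tight e he
        have h1 := hG.1 (M ∪ Z) (by simp [huM]) (by simp [hvM, hvZ])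
        have h2 := hG.1 (M ∩ Z) (by simp [huM, huZ]) (by simp [hvM])
        have h3 := cutOut_union_add_inter_le G M Z
        have hT : T (M ∪ Z) :=
          ⟨by simp [huM], by simp [hvM, hvZ], by simp [← hew, hwZ]; exact hew ▸ hwM, by omega⟩
        exact hM.2 hT Finset.subset_union_left (Finset.mem_union_right _ heZ)
      have h4 := cutOut_insert_le G hwM hall
      have h5 := hG.1 (insert w M) (by simp [huM]) (by simp [hvM, Ne.symm hwv])
      omega
    · push Not at hex
      refine Finset.sum_nonneg fun e he => ?_
      have := hex e he
      by_cases h1 : e.1 = w <;> simp_all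
  rw [net_eq_sum, ← Finset.add_sum_erase _ _ hu]
  have : 0 ≤ ∑ w ∈ X.erase u, net G {w} := by
    refine Finset.sum_nonneg fun w hw => hnet w (Finset.ne_of_mem_erase hw) ?_
    rintro rfl
    exact hv (Finset.mem_of_mem_erase hw)
  omega

lemma exists_dipath {A : V → V → Prop} {u v : V} (h : Relation.ReflTransGen A u v) :
    ∃ l, IsDipathList A u v l := by
  induction h using Relation.ReflTransGen.head_induction_on with
  | refl => exact ⟨[v], by simp, List.isChain_singleton v, by simp, by simp⟩
  | @head a b hab _ ih =>
    obtain ⟨l, hn, hc, hh, hl⟩ := ih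
    by_cases ha : a ∈ l
    · obtain ⟨s, t, rfl⟩ := List.append_of_mem ha
      exact ⟨a :: t, (List.nodup_append.1 hn).2.1, hc.right_of_append, by simp, by simpa using hl⟩
    · cases l with
      | nil => simp at hh
      | cons x t =>
        obtain rfl : x = b := by simpa using hh
        exact ⟨a :: x :: t, List.nodup_cons.2 ⟨ha, hn⟩, List.isChain_cons_cons.2 ⟨hab, hc⟩,
          by simp, by simpa using hl⟩

omit [DecidableEq V] in
lemma nodup_zip_tail {l : List V} (h : l.Nodup) : (l.zip l.tail).Nodup := by
  induction l with
  | nil => simp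
  | cons a t ih =>
    cases t with
    | nil => simp
    | cons b t =>
      rw [List.nodup_cons] at h
      simp only [List.tail_cons, List.zip_cons_cons, List.nodup_cons]
      exact ⟨fun hab => h.1 (List.of_mem_zip hab).1, ih h.2⟩

omit [DecidableEq V] in
lemma mem_of_mem_zip_tail {A : V → V → Prop} {l : List V} (h : l.IsChain A) {p : V × V}
    (hp : p ∈ l.zip l.tail) : A p.1 p.2 := by
  induction l with
  | nil => simp at hp
  | cons a t ih =>
    cases t with
    | nil => simp at hp
    | cons b t =>
      rw [List.isChain_cons_cons] at h
      simp only [List.tail_cons, List.zip_cons_cons, List.mem_cons] at hp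
      rcases hp with rfl | hp
      · exact h.1
      · exact ih h.2 (by simpa using hp)

lemma net_path {l : List V} {u v : V} (hn : l.Nodup) (hh : l.head? = some u)
    (hl : l.getLast? = some v) (X : Finset V) :
    net (l.zip l.tail).toFinset X = (if u ∈ X then 1 else 0) - (if v ∈ X then 1 else 0) := by
  rw [net, List.sum_toFinset _ (nodup_zip_tail hn)]
  clear hn
  induction l generalizing u with
  | nil => simp at hh
  | cons a t ih =>
    obtain rfl : a = u := by simpa using hh
    cases t with
    | nil =>
      obtain rfl : a = v := by simpa using hl
      simp
    | cons b t =>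
      have := ih (u := b) (by simp) (by simpa using hl)
      simp only [List.tail_cons] at this
      simp [this]

lemma cutOut_sdiff {G P : Finset (V × V)} (h : P ⊆ G) (X : Finset V) :
    cutOut (G \ P) X + cutOut P X = cutOut G X := Finset.sum_sdiff h

lemma net_sdiff {G P : Finset (V × V)} (h : P ⊆ G) (X : Finset V) :
    net (G \ P) X + net P X = net G X := Finset.sum_sdiff h

lemma exists_reach_of_cut [Fintype V] {G : Finset (V × V)} {u v : V}
    (h : ∀ X, u ∈ X → v ∉ X → 1 ≤ cutOut G X) :
    Relation.ReflTransGen (fun a b => (a, b) ∈ G) u v := by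
  classical
  by_contra hcon
  have := h (Finset.univ.filter fun w => Relation.ReflTransGen (fun a b => (a, b) ∈ G) u w)
    (by simpa using Relation.ReflTransGen.refl) (by simpa using hcon)
  have h0 : cutOut G (Finset.univ.filter fun w =>
      Relation.ReflTransGen (fun a b => (a, b) ∈ G) u w) = 0 := by
    refine Finset.sum_eq_zero fun e he => if_neg ?_
    simp only [Finset.mem_filter, Finset.mem_univ, true_and, not_and, not_not]
    exact fun h1 => h1.tail he
  omega

/-- The hard direction of Menger's theorem for arc-disjoint paths. A path in a minimal arc set has
net flow `1` across any `u`-`v` cut, so by `le_net_of_minimal` deleting its arcs lowers each cut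
bound by only one. -/
lemma menger [Fintype V] {u v : V} (n : ℕ) : ∀ (G : Finset (V × V)),
    (∀ X, u ∈ X → v ∉ X → (n : ℤ) ≤ cutOut G X) →
    ∃ P : Fin n → List V, (∀ i, IsDipathList (fun a b => (a, b) ∈ G) u v (P i)) ∧
      ∀ i j, i ≠ j → ∀ p : V × V, p ∈ (P i).zip (P i).tail → p ∉ (P j).zip (P j).tail := by
  induction n with
  | zero => exact fun G _ => ⟨fun i => i.elim0, fun i => i.elim0, fun i => i.elim0⟩
  | succ n ih =>
    intro G hG
    obtain ⟨H, hHG, hH⟩ := (Set.toFinite {G : Finset (V × V) |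
      ∀ X, u ∈ X → v ∉ X → ((n + 1 : ℕ) : ℤ) ≤ cutOut G X}).exists_le_minimal hG
    have hnet := fun {X} (h1 : u ∈ X) h2 => le_net_of_minimal hH (X := X) h1 h2
    obtain ⟨l, hl⟩ := exists_dipath (exists_reach_of_cut (G := H) (u := u) (v := v)
      fun X h1 h2 => by have := hH.1 X h1 h2; push_cast at this; omega)
    obtain ⟨hn, hc, hh, hla⟩ := hl
    have hsub : (l.zip l.tail).toFinset ⊆ H := by
      intro p hp
      exact mem_of_mem_zip_tail hc (List.mem_toFinset.1 hp)
    obtain ⟨P, hP, hdis⟩ := ih (H \ (l.zip l.tail).toFinset) (by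
      intro X h1 h2
      have h3 := net_path hn hh hla X
      rw [if_pos h1, if_neg h2] at h3
      have h4 := net_sdiff hsub X
      have h5 := hnet h1 h2
      have h6 := net_eq_sub (H \ (l.zip l.tail).toFinset) X
      have h7 := cutOut_nonneg (H \ (l.zip l.tail).toFinset) Xᶜ
      push_cast at h5
      omega)
    have hPl : ∀ i, ∀ p ∈ (P i).zip (P i).tail, p ∉ l.zip l.tail := by
      intro i p hp hpl
      have := mem_of_mem_zip_tail (hP i).2.1 hp
      rw [Finset.mem_sdiff, List.mem_toFinset] at this
      exact this.2 hpl
    refine ⟨Fin.cons l P, ?_, ?_⟩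
    · intro i
      cases i using Fin.cases with
      | zero => exact ⟨hn, hc.imp fun a b h => hHG h, hh, hla⟩
      | succ i =>
        obtain ⟨h1, h2, h3, h4⟩ := hP i
        exact ⟨h1, h2.imp fun a b h => hHG (Finset.mem_sdiff.1 h).1, h3, h4⟩
    · intro i j hij p hp hp'
      cases i using Fin.cases with
      | zero =>
        cases j using Fin.cases with
        | zero => exact hij rfl
        | succ j => exact hPl j p hp' hp
      | succ i =>
        cases j using Fin.cases with
        | zero => exact hPl i p hp hp'
        | succ j => exact hdis i j (fun h => hij (h ▸ rfl)) p hp hp'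

omit [DecidableEq V] in
lemma le_localArcConn {A : V → V → Prop} [Fintype V] {u v : V} (huv : u ≠ v) {n : ℕ}
    (h : ∃ P : Fin n → List V, (∀ i, IsDipathList A u v (P i)) ∧
      ∀ i j, i ≠ j → ∀ p : V × V, p ∈ (P i).zip (P i).tail → p ∉ (P j).zip (P j).tail) :
    n ≤ localArcConn A u v := by
  refine le_csSup ⟨Fintype.card (V × V), ?_⟩ h
  rintro m ⟨P, hP, hdis⟩
  have hne : ∀ i, ∃ p : V × V, p ∈ (P i).zip (P i).tail := by
    intro i
    obtain ⟨-, -, hh, hl⟩ := hP i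
    match hPi : P i with
    | [] => simp [hPi] at hh
    | [a] =>
      simp only [hPi, List.head?_cons, List.getLast?_singleton, Option.some.injEq] at hh hl
      exact absurd (hh.symm.trans hl) huv
    | a :: b :: t => exact ⟨(a, b), by simp⟩
  choose f hf using hne
  have hinj : Function.Injective f := by
    intro i j hij
    by_contra hne
    exact hdis i j hne (f i) (hf i) (hij ▸ hf j)
  simpa using Fintype.card_le_of_injective f hinj

omit [DecidableEq V] in
lemma localArcConn_le_max {A : V → V → Prop} [Finite V] {u v : V} (huv : u ≠ v) :
    localArcConn A u v ≤ maxLocalArcConn A := by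
  refine le_csSup (Set.Finite.bddAbove ?_) ⟨u, v, huv, rfl⟩
  refine (Set.finite_range fun p : V × V => localArcConn A p.1 p.2).subset ?_
  rintro n ⟨u, v, -, rfl⟩
  exact ⟨(u, v), rfl⟩

lemma le_localArcConn_of_cuts [Fintype V] {G : Finset (V × V)} {A : V → V → Prop}
    (hGA : ∀ a b, (a, b) ∈ G → A a b) {u v : V} (huv : u ≠ v) {n : ℕ}
    (h : ∀ X, u ∈ X → v ∉ X → (n : ℤ) ≤ cutOut G X) : n ≤ localArcConn A u v := by
  obtain ⟨P, hP, hdis⟩ := menger n G h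
  refine le_localArcConn huv ⟨P, fun i => ?_, hdis⟩
  obtain ⟨h1, h2, h3, h4⟩ := hP i
  exact ⟨h1, h2.imp hGA, h3, h4⟩

/-! ### Degrees -/

/-- If every proper cut has at least `k` arcs and every ordered pair of vertices is separated by a
cut with exactly `k`, then in- and out-degrees agree. For each `r`, the maximal tight sets avoiding
`r` partition the remaining vertices, and each has net flow at most `0`; hence `net G {r} ≥ 0`.
As the net flows sum to `0`, they all vanish. -/
lemma net_eq_zero [Fintype V] {G : Finset (V × V)} {k : ℤ}
    (hcut : ∀ X : Finset V, X.Nonempty → Xᶜ.Nonempty → k ≤ cutOut G X)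
    (htight : ∀ u v, u ≠ v → ∃ X, u ∈ X ∧ v ∉ X ∧ cutOut G X ≤ k) (r : V) :
    net G {r} = 0 := by
  classical
  have htot : ∑ w, net G {w} = 0 := by
    rw [← net_eq_sum]; simp [net]
  have hnn : ∀ r, 0 ≤ net G {r} := by
    intro r
    let T : Finset V → Prop := fun X => r ∉ X ∧ X.Nonempty ∧ cutOut G X = k
    let F : Finset (Finset V) := Finset.univ.filter fun X => Maximal T X
    have hF : ∀ X, X ∈ F ↔ Maximal T X := fun X => by simp [F]
    have hdis : (F : Set (Finset V)).PairwiseDisjoint id := by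
      intro X hX Y hY hXY
      rw [Finset.mem_coe, hF] at hX hY
      obtain ⟨hrX, hXne, hXk⟩ := hX.1
      obtain ⟨hrY, hYne, hYk⟩ := hY.1
      by_contra hnd
      have hne : (X ∩ Y).Nonempty := by
        rw [Finset.nonempty_iff_ne_empty]
        exact fun h => hnd (Finset.disjoint_iff_inter_eq_empty.2 h)
      have h1 := hcut (X ∩ Y) hne ⟨r, by simp [hrX]⟩
      have h2 := hcut (X ∪ Y) (hXne.mono Finset.subset_union_left) ⟨r, by simp [hrX, hrY]⟩
      have h3 := cutOut_union_add_inter_le G X Y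
      have hT : T (X ∪ Y) :=
        ⟨by simp [hrX, hrY], hXne.mono Finset.subset_union_left, by omega⟩
      exact hXY ((hX.eq_of_le hT Finset.subset_union_left).trans
        (hY.eq_of_le hT Finset.subset_union_right).symm)
    have hcover : F.biUnion id = Finset.univ.erase r := by
      ext w
      simp only [Finset.mem_biUnion, id, Finset.mem_erase, Finset.mem_univ, and_true]
      constructor
      · rintro ⟨X, hX, hw⟩ rfl
        exact ((hF _).1 hX).1.1 hw
      · intro hwr
        obtain ⟨X, hwX, hrX, hX⟩ := htight w r hwr
        have hT : T X := ⟨hrX, ⟨w, hwX⟩, le_antisymm hX (hcut X ⟨w, hwX⟩ ⟨r, by simpa⟩)⟩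
        obtain ⟨Y, hXY, hY⟩ := (Set.toFinite {X | T X}).exists_le_maximal hT
        exact ⟨Y, (hF Y).2 hY, hXY hwX⟩
    have hle : ∑ w ∈ Finset.univ.erase r, net G {w} ≤ 0 := by
      rw [← hcover, Finset.sum_biUnion hdis]
      refine Finset.sum_nonpos fun X hX => ?_
      obtain ⟨hrX, hXne, hXk⟩ := ((hF X).1 hX).1
      have := hcut Xᶜ ⟨r, by simpa⟩ (by simpa using hXne)
      rw [id, ← net_eq_sum, net_eq_sub]
      omega
    rw [← Finset.add_sum_erase _ _ (Finset.mem_univ r)] at htot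
    omega
  exact (Finset.sum_eq_zero_iff_of_nonneg fun w _ => hnn w).1 htot r (Finset.mem_univ r)

lemma inDeg_eq_outDeg [Fintype V] {G : Finset (V × V)} {A : V → V → Prop}
    (hGA : ∀ a b, (a, b) ∈ G ↔ A a b) {r : V} (h : net G {r} = 0) :
    inDeg A r = outDeg A r := by
  have hin : inDeg A r = (G.filter fun e => e.2 = r).card := by
    rw [inDeg, ← Set.ncard_coe_finset]
    refine Set.ncard_congr (fun w _ => (w, r)) ?_ ?_ ?_
    · intro w hw; simpa [hGA] using hw
    · intro a b _ _ hab; simpa using hab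
    · rintro ⟨a, b⟩ hab
      simp only [Finset.coe_filter, Set.mem_ofPred_eq, hGA] at hab
      obtain ⟨hab, rfl⟩ := hab
      exact ⟨a, hab, rfl⟩
  have hout : outDeg A r = (G.filter fun e => e.1 = r).card := by
    rw [outDeg, ← Set.ncard_coe_finset]
    refine Set.ncard_congr (fun w _ => (r, w)) ?_ ?_ ?_
    · intro w hw; simpa [hGA] using hw
    · intro a b _ _ hab; simpa using hab
    · rintro ⟨a, b⟩ hab
      simp only [Finset.coe_filter, Set.mem_ofPred_eq, hGA] at hab
      obtain ⟨hab, rfl⟩ := hab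
      exact ⟨b, hab, rfl⟩
  simp only [net, Finset.mem_singleton, Finset.sum_sub_distrib, Finset.sum_boole] at h
  rw [hin, hout]
  omega

/-! ### Colourings and cuts -/

omit [DecidableEq V] in
lemma goodColouring_mono {A B : V → V → Prop} {k : ℕ} {φ : V → Fin k} (h : GoodColouring A φ)
    (hBA : ∀ a b, B a b → A a b) : GoodColouring B φ := by
  intro c v hv hc
  exact h c v hv (Relation.TransGen.mono (fun a b hab => ⟨hBA a b hab.1, hab.2⟩) _ _ hc)

omit [DecidableEq V] in
/-- Gluing a colouring on `X` to one off `X`, recoloured through `σ`: if no arc from `X` to its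
complement is monochromatic, every monochromatic cycle stays on one side. -/
lemma goodColouring_glue {A : V → V → Prop} {k : ℕ} {φ φ₁ φ₂ : V → Fin k} {X : Set V}
    (h₁ : GoodColouring (fun a b => A a b ∧ a ∈ X ∧ b ∈ X) φ₁)
    (h₂ : GoodColouring (fun a b => A a b ∧ a ∉ X ∧ b ∉ X) φ₂)
    (σ : Fin k → Fin k)
    (hφ₁ : ∀ a ∈ X, φ a = φ₁ a) (hφ₂ : ∀ a ∉ X, σ (φ a) = φ₂ a)
    (hX : ∀ a ∈ X, ∀ b ∉ X, A a b → φ a ≠ φ b) : GoodColouring A φ := by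
  intro c v hvc hcyc
  by_cases hv : v ∈ X
  · have key : ∀ w, Relation.TransGen (fun a b => A a b ∧ φ a = c ∧ φ b = c) v w →
        w ∈ X ∧ Relation.TransGen
          (fun a b => (A a b ∧ a ∈ X ∧ b ∈ X) ∧ φ₁ a = c ∧ φ₁ b = c) v w := by
      have step : ∀ a b, a ∈ X → (A a b ∧ φ a = c ∧ φ b = c) → b ∈ X ∧
          ((A a b ∧ a ∈ X ∧ b ∈ X) ∧ φ₁ a = c ∧ φ₁ b = c) := by
        rintro a b ha ⟨hab, hac, hbc⟩
        have hb : b ∈ X := by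
          by_contra hb
          exact hX a ha b hb hab (hac.trans hbc.symm)
        exact ⟨hb, ⟨hab, ha, hb⟩, hφ₁ a ha ▸ hac, hφ₁ b hb ▸ hbc⟩
      intro w hw
      induction hw with
      | single h => exact ⟨(step _ _ hv h).1, .single (step _ _ hv h).2⟩
      | tail _ h ih => exact ⟨(step _ _ ih.1 h).1, ih.2.tail (step _ _ ih.1 h).2⟩
    exact h₁ c v (hφ₁ v hv ▸ hvc) (key v hcyc).2
  · have key : ∀ w, Relation.TransGen (fun a b => A a b ∧ φ a = c ∧ φ b = c) w v →
        w ∉ X ∧ Relation.TransGen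
          (fun a b => (A a b ∧ a ∉ X ∧ b ∉ X) ∧ φ₂ a = σ c ∧ φ₂ b = σ c) w v := by
      have step : ∀ a b, b ∉ X → (A a b ∧ φ a = c ∧ φ b = c) → a ∉ X ∧
          ((A a b ∧ a ∉ X ∧ b ∉ X) ∧ φ₂ a = σ c ∧ φ₂ b = σ c) := by
        rintro a b hb ⟨hab, hac, hbc⟩
        have ha : a ∉ X := fun ha => hX a ha b hb hab (hac.trans hbc.symm)
        exact ⟨ha, ⟨hab, ha, hb⟩, by rw [← hφ₂ a ha, hac], by rw [← hφ₂ b hb, hbc]⟩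
      intro w hw
      induction hw using Relation.TransGen.head_induction_on with
      | single h => exact ⟨(step _ _ hv h).1, .single (step _ _ hv h).2⟩
      | head h _ ih => exact ⟨(step _ _ ih.1 h).1, .head (step _ _ ih.1 h).2 ih.2⟩
    exact h₂ (σ c) v (by rw [← hφ₂ v hv, hvc]) (key v hcyc).2

/-- With fewer than `k` arcs from `X` to its complement, some cyclic shift of the colours on the
complement makes none of these arcs monochromatic, as each arc spoils exactly one shift. -/
lemma exists_goodColouring_of_cutOut_lt {G : Finset (V × V)} {k : ℕ} (hk : 1 ≤ k)
    {X : Finset V}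
    (h₁ : ∃ φ : V → Fin k, GoodColouring (fun a b => (a, b) ∈ G ∧ a ∈ X ∧ b ∈ X) φ)
    (h₂ : ∃ φ : V → Fin k, GoodColouring (fun a b => (a, b) ∈ G ∧ a ∉ X ∧ b ∉ X) φ)
    (hlt : cutOut G X < k) :
    ∃ φ : V → Fin k, GoodColouring (fun a b => (a, b) ∈ G) φ := by
  obtain ⟨φ₁, h₁⟩ := h₁
  obtain ⟨φ₂, h₂⟩ := h₂
  have : NeZero k := ⟨by omega⟩
  let C := G.filter fun e => e.1 ∈ X ∧ e.2 ∉ X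
  have hC : (C.card : ℤ) < k := by simpa [cutOut, C] using hlt
  obtain ⟨j, hj⟩ : ∃ j, j ∉ C.image fun e => φ₁ e.1 - φ₂ e.2 := by
    by_contra! hcon
    have h3 : (Finset.univ : Finset (Fin k)).card ≤ _ :=
      Finset.card_le_card (fun j _ => hcon j)
    have h4 := h3.trans Finset.card_image_le
    simp only [Finset.card_univ, Fintype.card_fin] at h4
    omega
  refine ⟨fun a => if a ∈ X then φ₁ a else φ₂ a + j,
    goodColouring_glue (X := (X : Set V)) (φ₁ := φ₁) (φ₂ := φ₂) (by simpa using h₁)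
      (by simpa using h₂) (fun c => c - j) ?_ ?_ ?_⟩
  · intro a ha
    exact if_pos ha
  · intro a ha
    simp only [Finset.mem_coe] at ha
    simp [ha]
  · intro a ha b hb hab heq
    simp only [Finset.mem_coe] at ha hb
    simp only [ha, hb, if_true, if_false] at heq
    refine hj (Finset.mem_image.2 ⟨(a, b), by simp [C, hab, ha, hb], ?_⟩)
    simp [heq]

/-! ### Ears and the dicritical subdigraph -/

omit [DecidableEq V] in
/-- If the arcs `E` (which include all arcs meeting the complement of `S`) never lead from one vertex
of `S` to another, then `S` is everything: by strong connectivity each vertex outside `S` reaches,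
and is reached from, a single vertex `a` of `S`, and then `a` would be a cut vertex separating the
vertices attached to it from the rest of `S`. -/
lemma eq_univ_of_no_ear {A E : V → V → Prop} {S : Set V} (hA : StronglyConnected A)
    (h2 : ∀ x : V, UnderlyingConnected (fun a b : {v : V // v ≠ x} => A a.1 b.1))
    (hE : ∀ a ∈ S, ∀ b ∈ S, Relation.ReflTransGen E a b → a = b)
    (hAE : ∀ a b, A a b → (a ∉ S ∨ b ∉ S) → E a b) (hS : S.Nontrivial) : S = Set.univ := by
  obtain ⟨s, hs, t, ht, hst⟩ := hS
  have hto : ∀ x, ∃ a ∈ S, Relation.ReflTransGen E x a := by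
    intro x
    induction hA x s using Relation.ReflTransGen.head_induction_on with
    | refl => exact ⟨s, hs, .refl⟩
    | @head x y hxy _ ih =>
      by_cases hx : x ∈ S
      · exact ⟨x, hx, .refl⟩
      · obtain ⟨a, ha, hya⟩ := ih
        exact ⟨a, ha, .head (hAE x y hxy (.inl hx)) hya⟩
  have hfrom : ∀ x, ∃ a ∈ S, Relation.ReflTransGen E a x := by
    intro x
    induction hA s x with
    | refl => exact ⟨s, hs, .refl⟩
    | @tail x y _ hxy ih =>
      by_cases hy : y ∈ S
      · exact ⟨y, hy, .refl⟩
      · obtain ⟨a, ha, hax⟩ := ih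
        exact ⟨a, ha, .tail hax (hAE x y hxy (.inr hy))⟩
  by_contra hne
  obtain ⟨x₀, hx₀⟩ := (Set.ne_univ_iff_exists_notMem S).1 hne
  obtain ⟨a, ha, hxa⟩ := hto x₀
  have hadj : ∀ x y, x ≠ a → Relation.ReflTransGen E x a → (A x y ∨ A y x) →
      Relation.ReflTransGen E y a := by
    intro x y hx hxa hxy
    have hxS : x ∉ S := fun h => hx (hE x h a ha hxa)
    rcases hxy with hxy | hyx
    · obtain ⟨a', ha', hax⟩ := hfrom x
      obtain ⟨b, hb, hyb⟩ := hto y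
      have hxb : Relation.ReflTransGen E x b := .head (hAE x y hxy (.inl hxS)) hyb
      have h1 := hE a' ha' a ha (hax.trans hxa)
      have h2 := hE a' ha' b hb (hax.trans hxb)
      rwa [← h1, h2]
    · exact .head (hAE y x hyx (.inr hxS)) hxa
  obtain ⟨b, hb, hba⟩ : ∃ b ∈ S, b ≠ a := by
    by_cases h : s = a
    · exact ⟨t, ht, fun h' => hst (h.trans h'.symm)⟩
    · exact ⟨s, hs, h⟩
  have hall : ∀ y : {v : V // v ≠ a}, Relation.ReflTransGen E y.1 a := by
    intro y
    induction (h2 a).2 ⟨x₀, fun h => hx₀ (h ▸ ha)⟩ y with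
    | refl => exact hxa
    | @tail y z _ hyz ih => exact hadj y.1 z.1 y.2 ih hyz
  exact hba (hE b hb a ha (hall ⟨b, hba⟩))

lemma exists_cut_arc [Fintype V] {E : V → V → Prop} {X : Finset V} {a b : V}
    (h : Relation.ReflTransGen E a b) (ha : a ∈ X) (hb : b ∉ X) :
    ∃ x ∈ X, ∃ y ∉ X, E x y := by
  by_contra! hcon
  have hall : ∀ c, Relation.ReflTransGen E a c → c ∈ X := by
    intro c hc
    induction hc with
    | refl => exact ha
    | tail _ hxy ih =>
      by_contra hy
      exact hcon _ ih _ hy hxy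
  exact hb (hall b h)

lemma cutOut_lt_of_arc {H G : Finset (V × V)} (hHG : H ⊆ G) {X : Finset V} {a b : V}
    (ha : a ∈ X) (hb : b ∉ X) (hG : (a, b) ∈ G) (hH : (a, b) ∉ H) :
    cutOut H X + 1 ≤ cutOut G X := by
  have h1 := cutOut_sdiff hHG X
  have h2 : 1 ≤ cutOut (G \ H) X := by
    have := Finset.single_le_sum (f := fun e : V × V => if e.1 ∈ X ∧ e.2 ∉ X then (1 : ℤ) else 0)
      (fun e _ => by split_ifs <;> simp) (Finset.mem_sdiff.2 ⟨hG, hH⟩)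
    exact (if_pos ⟨ha, hb⟩).symm.trans_le this
  omega

omit [DecidableEq V] in
lemma dichrom_subtype_le {A : V → V → Prop} {k : ℕ} (S : Set V)
    (h : ∃ φ : V → Fin k, GoodColouring A φ) : dichrom (fun a b : S => A a.1 b.1) ≤ k := by
  obtain ⟨φ, hφ⟩ := h
  refine Nat.sInf_le ⟨fun a => φ a.1, fun c v hv hc => hφ c v.1 hv ?_⟩
  exact Relation.TransGen.lift Subtype.val (fun a b h => h) _ _ hc

/-- In a minimal arc set without a `k`-dicolouring, every cut that separates two non-isolated
vertices has at least `k` arcs. -/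
lemma le_cutOut_of_minimal [Fintype V] {H : Finset (V × V)} {k : ℕ} (hk : 1 ≤ k)
    (hH : Minimal (fun H : Finset (V × V) =>
      ¬ ∃ φ : V → Fin k, GoodColouring (fun a b => (a, b) ∈ H) φ) H)
    {X : Finset V} {p q : V} (hp : p ∈ X) (hq : q ∉ X)
    (hpH : ∃ e ∈ H, e.1 = p ∨ e.2 = p) (hqH : ∃ e ∈ H, e.1 = q ∨ e.2 = q) :
    (k : ℤ) ≤ cutOut H X := by
  by_contra! hlt
  have key : ∀ (Y : V → Prop) (r : V), ¬ Y r → (∃ e ∈ H, e.1 = r ∨ e.2 = r) →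
      ∃ φ : V → Fin k, GoodColouring (fun a b => (a, b) ∈ H ∧ Y a ∧ Y b) φ := by
    classical
    intro Y r hr ⟨e, he, her⟩
    by_contra hcon
    have := hH.2 (y := H.filter fun e => Y e.1 ∧ Y e.2) (by simpa using hcon)
      (Finset.filter_subset _ _) he
    rw [Finset.mem_filter] at this
    rcases her with rfl | rfl
    · exact hr this.2.1
    · exact hr this.2.2
  exact hH.1 (exists_goodColouring_of_cutOut_lt hk (key (· ∈ X) q hq hqH)
    (key (· ∉ X) p (by simpa using hp) hpH) hlt)

end Extremal

open Extremal
theorem stmt2 {V : Type} [Fintype V] (A : V → V → Prop) (hirr : Irreflexive A)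
    (k : ℕ) (hk : 1 ≤ k) (hext : IsExtremal A k) :
    (∀ v : V, inDeg A v = outDeg A v) ∧
    (dichrom A = k + 1 ∧
      ∀ (S : Set V) (B : V → V → Prop),
        (∀ a b : V, B a b → A a b ∧ a ∈ S ∧ b ∈ S) →
        ¬ (S = Set.univ ∧ B = A) →
        dichrom (fun a b : S => B a.1 b.1) ≤ k) ∧
    (∀ u v : V, u ≠ v → localArcConn A u v = k) := by
  classical
  obtain ⟨hstrong, ⟨-, h2conn⟩, hchi, hlam⟩ := hext
  let G : Finset (V × V) := Finset.univ.filter fun e => A e.1 e.2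
  have hG : ∀ a b, (a, b) ∈ G ↔ A a b := fun a b => by simp [G]
  have hle : ∀ u v : V, u ≠ v → localArcConn A u v ≤ k := fun u v huv =>
    (localArcConn_le_max huv).trans_eq hlam
  have htight : ∀ u v : V, u ≠ v → ∃ X : Finset V, u ∈ X ∧ v ∉ X ∧ cutOut G X ≤ k := by
    intro u v huv
    by_contra! hcon
    have := le_localArcConn_of_cuts (fun a b => (hG a b).1) huv (n := k + 1)
      fun X h1 h2 => by have := hcon X h1 h2; push_cast; omega
    have := hle u v huv
    omega
  have hnot : ¬ ∃ φ : V → Fin k, GoodColouring (fun a b => (a, b) ∈ G) φ := by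
    simp only [hG]
    intro h
    have : dichrom A ≤ k := Nat.sInf_le h
    omega
  obtain ⟨H, hHG, hH⟩ := (Set.toFinite {H : Finset (V × V) |
    ¬ ∃ φ : V → Fin k, GoodColouring (fun a b => (a, b) ∈ H) φ}).exists_le_minimal hnot
  -- `H` is the arc set of a dicritical subdigraph, whose vertex set is `S`.
  let S : Set V := {p | ∃ e ∈ H, e.1 = p ∨ e.2 = p}
  have hcutH : ∀ (X : Finset V) (p q : V), p ∈ X → q ∉ X → p ∈ S → q ∈ S →
      (k : ℤ) ≤ cutOut H X :=
    fun X p q hp hq hpS hqS => le_cutOut_of_minimal hk hH hp hq hpS hqS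
  -- An ear from `a` to `b` would add an arc to a cut of `H`, which already has `k` arcs.
  have hear : ∀ a ∈ S, ∀ b ∈ S,
      Relation.ReflTransGen (fun x y => A x y ∧ (x, y) ∉ H) a b → a = b := by
    intro a ha b hb hab
    by_contra hne
    obtain ⟨X, haX, hbX, hX⟩ := htight a b hne
    obtain ⟨x, hx, y, hy, hxy, hxyH⟩ := exists_cut_arc hab haX hbX
    have h1 := cutOut_lt_of_arc hHG hx hy ((hG x y).2 hxy) hxyH
    have h2 := hcutH X a b haX hbX ha hb
    omega
  have hS : S = Set.univ := by
    refine eq_univ_of_no_ear hstrong h2conn hear ?_ ?_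
    · intro a b hab h
      refine ⟨hab, fun hH => ?_⟩
      rcases h with h | h
      · exact h ⟨_, hH, .inl rfl⟩
      · exact h ⟨_, hH, .inr rfl⟩
    · obtain ⟨e, he⟩ : H.Nonempty := by
        rw [Finset.nonempty_iff_ne_empty]
        rintro rfl
        refine hH.1 ⟨fun _ => ⟨0, hk⟩, fun c v _ hc => ?_⟩
        obtain ⟨_, h, _⟩ := Relation.TransGen.head'_iff.1 hc
        simp at h
      refine ⟨e.1, ⟨e, he, .inl rfl⟩, e.2, ⟨e, he, .inr rfl⟩, fun h => ?_⟩
      have := (hG e.1 e.2).1 (hHG he)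
      rw [h] at this
      exact hirr _ this
  have hmem : ∀ v, v ∈ S := fun v => hS ▸ Set.mem_univ v
  have hHA : ∀ a b, A a b → (a, b) ∈ H := by
    intro a b hab
    by_contra hn
    have := hear a (hmem a) b (hmem b) (.single ⟨hab, hn⟩)
    exact hirr a (this ▸ hab)
  obtain rfl : H = G := le_antisymm hHG fun e he => hHA _ _ ((hG _ _).1 he)
  have hcut : ∀ (X : Finset V) (p q : V), p ∈ X → q ∉ X → (k : ℤ) ≤ cutOut G X :=
    fun X p q hp hq => hcutH X p q hp hq (hmem p) (hmem q)
  refine ⟨fun v => ?_, ⟨hchi, fun S' B hB hne => ?_⟩, fun u v huv => ?_⟩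
  · refine inDeg_eq_outDeg hG (net_eq_zero (k := k) ?_ htight v)
    rintro X ⟨p, hp⟩ ⟨q, hq⟩
    exact hcut X p q hp (Finset.mem_compl.1 hq)
  · have hBne : ∃ a b, A a b ∧ ¬ B a b := by
      by_contra! hcon
      refine hne ⟨Set.eq_univ_of_forall fun v => ?_, ?_⟩
      · obtain ⟨e, he, hev⟩ := hmem v
        have := hB _ _ (hcon _ _ ((hG e.1 e.2).1 he))
        rcases hev with rfl | rfl
        · exact this.2.1
        · exact this.2.2
      · ext a b
        exact ⟨fun h => (hB a b h).1, hcon a b⟩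
    obtain ⟨a, b, hab, hnab⟩ := hBne
    refine dichrom_subtype_le (A := B) S' ?_
    by_contra hcon
    have := hH.2 (y := G.filter fun e => B e.1 e.2) ?_ (Finset.filter_subset _ _) (hHA a b hab)
    · exact hnab (Finset.mem_filter.1 this).2
    · rintro ⟨φ, hφ⟩
      exact hcon ⟨φ, goodColouring_mono hφ fun a b h =>
        Finset.mem_filter.2 ⟨hHA a b (hB a b h).1, h⟩⟩
  · refine le_antisymm (hle u v huv) ?_
    exact le_localArcConn_of_cuts (fun a b => (hG a b).1) huv
      fun X h1 h2 => hcut X u v h1 h2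
end

section
/- Let H be a digraph and c a positive integer such that every tournament with no induced subdigraph isomorphic to H has dichromatic number at most c. Then every quasi-transitive oriented graph with no induced subdigraph isomorphic to H has dichromatic number at most c. -/
/-- Oriented graph: no digon (this also forces looplessness). -/
def IsOriented {V : Type} (A : V → V → Prop) : Prop := ∀ u v : V, A u v → ¬ A v u

def IsTournament {V : Type} (A : V → V → Prop) : Prop :=
  IsOriented A ∧ ∀ u v : V, u ≠ v → A u v ∨ A v u

/-- Quasi-transitive: whenever `xy` and `yz` are arcs (with `x ≠ z`), `x` and `z` are adjacent. -/
def QuasiTransitive {V : Type} (A : V → V → Prop) : Prop :=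
  ∀ x y z : V, A x y → A y z → x = z ∨ A x z ∨ A z x

/-- `A` contains an induced copy of `B`. -/
def HasInducedCopy {V W : Type} (A : V → V → Prop) (B : W → W → Prop) : Prop :=
  ∃ f : W → V, Function.Injective f ∧ ∀ a b : W, B a b ↔ A (f a) (f b)

namespace QT

variable {V : Type}

/-- The arcs of `A` with both ends satisfying `P`. -/
def Arc (A : V → V → Prop) (P : V → Prop) (a b : V) : Prop := A a b ∧ P a ∧ P b

/-- The subdigraph of `A` induced by `P` has no directed closed walk (equivalently, no directed
cycle). -/
def Acyc (A : V → V → Prop) (P : V → Prop) : Prop := ∀ v, ¬ Relation.TransGen (Arc A P) v v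

/-- The subdigraph induced by `s` has a dicolouring with colours from the set `C`. -/
def Col (A : V → V → Prop) (s : Finset V) (C : Finset ℕ) : Prop :=
  ∃ φ : V → ℕ, (∀ v ∈ s, φ v ∈ C) ∧ ∀ c, Acyc A (fun v => v ∈ s ∧ φ v = c)

/-- The subdigraph induced by `s` splits into non-empty parts `P` and `¬ P` with no arc from `P`
to `¬ P`, i.e. it is not strongly connected. -/
def Cut (A : V → V → Prop) (s : Finset V) : Prop :=
  ∃ P : V → Prop, (∃ y ∈ s, P y) ∧ (∃ x ∈ s, ¬ P x) ∧
    ∀ y ∈ s, ∀ x ∈ s, P y → ¬ P x → ¬ A y x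

/-- The subdigraph induced by `s` splits into non-empty parts `P` and `¬ P` with all pairs between
them adjacent, i.e. its non-adjacency graph is disconnected. -/
def Join (A : V → V → Prop) (s : Finset V) : Prop :=
  ∃ P : V → Prop, (∃ y ∈ s, P y) ∧ (∃ x ∈ s, ¬ P x) ∧
    ∀ y ∈ s, ∀ x ∈ s, P y → ¬ P x → A y x ∨ A x y

/-- `a` and `b` are connected in the non-adjacency graph of the subdigraph induced by `s`. -/
def CoConn (A : V → V → Prop) (s : Finset V) : V → V → Prop :=
  Relation.ReflTransGen (fun a b => a ∈ s ∧ b ∈ s ∧ ¬ A a b ∧ ¬ A b a)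

theorem Acyc.mono {A : V → V → Prop} {P Q : V → Prop} (h : Acyc A Q) (hPQ : ∀ v, P v → Q v) :
    Acyc A P := fun v hv =>
  h v (Relation.TransGen.mono
    (fun _ _ hab => ⟨hab.1, hPQ _ hab.2.1, hPQ _ hab.2.2⟩ : Arc A P ≤ Arc A Q) v v hv)

/-! ### Connectivity in the non-adjacency graph -/

theorem CoConn.symm {A : V → V → Prop} {s : Finset V} {a b : V} (h : CoConn A s a b) :
    CoConn A s b a := by
  induction h with
  | refl => exact .refl
  | tail _ hbc ih => exact Relation.ReflTransGen.head ⟨hbc.2.1, hbc.1, hbc.2.2.2, hbc.2.2.1⟩ ih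

theorem CoConn.mem {A : V → V → Prop} {s : Finset V} {a b : V} (h : CoConn A s a b)
    (ha : a ∈ s) : b ∈ s := by
  induction h with
  | refl => exact ha
  | tail _ hbc _ => exact hbc.2.1

theorem CoConn.adj {A : V → V → Prop} {s : Finset V} {a b p : V} (h : CoConn A s a b)
    (ha : a ∈ s) (hp : p ∈ s) (hap : ¬ CoConn A s a p) : A b p ∨ A p b := by
  by_contra hn
  push Not at hn
  exact hap (Relation.ReflTransGen.tail h ⟨h.mem ha, hp, hn.1, hn.2⟩)

/-- The components of the non-adjacency graph are modules: a vertex `p` outside the component of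
`a` is related to all vertices of this component as it is to `a`. -/
theorem coConn_uniform {A : V → V → Prop} (hO : IsOriented A) (hQ : QuasiTransitive A)
    {s : Finset V} {a b p : V} (h : CoConn A s a b) (ha : a ∈ s) (hp : p ∈ s)
    (hap : ¬ CoConn A s a p) : (A p a → A p b) ∧ (A a p → A b p) := by
  induction h with
  | refl => exact ⟨id, id⟩
  | @tail b d hab hbd ih =>
    have hadj : A d p ∨ A p d := CoConn.adj (Relation.ReflTransGen.tail hab hbd) ha hp hap
    obtain ⟨_, _, h1, h2⟩ := hbd
    refine ⟨fun h => ?_, fun h => ?_⟩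
    · have h3 := ih.1 h
      rcases hadj with h4 | h4
      · rcases hQ _ _ _ h4 h3 with rfl | h5 | h5
        · exact absurd h4 (hO _ _ h3)
        · exact absurd h5 h2
        · exact absurd h5 h1
      · exact h4
    · have h3 := ih.2 h
      rcases hadj with h4 | h4
      · exact h4
      · rcases hQ _ _ _ h3 h4 with rfl | h5 | h5
        · exact absurd h4 (hO _ _ h3)
        · exact absurd h5 h1
        · exact absurd h5 h2

/-! ### The cut–join dichotomy -/

theorem quasiTransitive_flip {A : V → V → Prop} (hQ : QuasiTransitive A) :
    QuasiTransitive (flip A) := by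
  intro x y z h1 h2
  rcases hQ z y x h2 h1 with h | h | h
  · exact Or.inl h.symm
  · exact Or.inr (Or.inl h)
  · exact Or.inr (Or.inr h)

theorem cut_of_flip {A : V → V → Prop} {s : Finset V} (h : Cut (flip A) s) : Cut A s := by
  obtain ⟨P, hy, hx, h⟩ := h
  exact ⟨fun v => ¬ P v, hx, by simpa using hy,
    fun y hy x hx h1 h2 => h x hx y hy (not_not.mp h2) h1⟩

open Classical in
/-- Adding `v` to a set without arcs from `P` to `¬ P` gives a set with a cut, provided some
vertex `u` of the part `P` is not adjacent to `v`. -/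
theorem cut_insert_of_cut {A : V → V → Prop} (hQ : QuasiTransitive A)
    {s : Finset V} {v : V} (hv : v ∉ s) (P : V → Prop) (hX : ∃ x ∈ s, ¬ P x)
    (hcut : ∀ y ∈ s, ∀ x ∈ s, P y → ¬ P x → ¬ A y x)
    {u : V} (hu : u ∈ s) (hPu : P u) (h1 : ¬ A u v) (h2 : ¬ A v u) :
    Cut A (insert v s) := by
  by_cases hx : ∃ x ∈ s, ¬ P x ∧ A v x
  · obtain ⟨x, hxs, hPx, hvx⟩ := hx
    by_cases hS : ∃ u₁ ∈ s, P u₁ ∧ ¬ A u₁ v ∧ ¬ A v u₁ ∧ ∃ p ∈ s, ¬ P p ∧ A p u₁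
    -- The in-neighbours of `u₁` in the part `¬ P` receive no arc from outside.
    · obtain ⟨u₁, hu₁, hPu₁, h3, h4, p, hps, hPp, hpu⟩ := hS
      refine ⟨fun q => ¬ (q ∈ s ∧ ¬ P q ∧ A q u₁), ⟨u₁, by simp [hu₁], fun h => h.2.1 hPu₁⟩,
        ⟨p, by simp [hps], by simp [hps, hPp, hpu]⟩, ?_⟩
      intro q hq r hr hq1 hr1 hqr
      obtain ⟨hrs, hPr, hru⟩ := not_not.mp hr1
      rcases Finset.mem_insert.mp hq with rfl | hqs
      · rcases hQ _ _ _ hqr hru with rfl | h | h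
        · exact hv hu₁
        · exact h4 h
        · exact h3 h
      · have hPq : ¬ P q := fun h => hcut q hqs r hrs h hPr hqr
        rcases hQ _ _ _ hqr hru with rfl | h | h
        · exact hPq hPu₁
        · exact hq1 ⟨hqs, hPq, h⟩
        · exact hcut u₁ hu₁ q hqs hPu₁ hPq h
    -- The non-neighbours of `v` in the part `P` receive no arc from outside.
    · refine ⟨fun q => ¬ (q ∈ s ∧ P q ∧ ¬ A q v ∧ ¬ A v q), ⟨v, by simp, fun h => hv h.1⟩,
        ⟨u, by simp [hu], by simp [hu, hPu, h1, h2]⟩, ?_⟩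
      intro b hb r hr hb1 hr1 hbr
      obtain ⟨hrs, hPr, hrv, hvr⟩ := not_not.mp hr1
      rcases Finset.mem_insert.mp hb with rfl | hbs
      · exact hvr hbr
      · have hPb : P b := by
          by_contra hPb
          exact hS ⟨r, hrs, hPr, hrv, hvr, b, hbs, hPb, hbr⟩
        by_cases hvb : A v b
        · rcases hQ _ _ _ hvb hbr with rfl | h | h
          · exact hv hrs
          · exact hvr h
          · exact hrv h
        · have hbv : A b v := by
            by_contra hbv
            exact hb1 ⟨hbs, hPb, hbv, hvb⟩
          have hxb : A x b := by
            rcases hQ _ _ _ hbv hvx with rfl | h | h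
            · exact absurd hPb hPx
            · exact absurd h (hcut b hbs x hxs hPb hPx)
            · exact h
          rcases hQ _ _ _ hxb hbr with rfl | h | h
          · exact hPx hPr
          · exact hS ⟨r, hrs, hPr, hrv, hvr, x, hxs, hPx, h⟩
          · exact hcut r hrs x hxs hPr hPx h
  · push Not at hx
    obtain ⟨x, hxs, hPx⟩ := hX
    refine ⟨fun q => P q ∨ q = v, ⟨v, by simp⟩, ⟨x, by simp [hxs], ?_⟩, ?_⟩
    · rintro (h | rfl)
      · exact hPx h
      · exact hv hxs
    · intro y hy r hr hy1 hr1
      push Not at hr1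
      have hrs : r ∈ s := (Finset.mem_insert.mp hr).resolve_left hr1.2
      rcases Finset.mem_insert.mp hy with rfl | hys
      · exact hx r hrs hr1.1
      · rcases hy1 with h | rfl
        · exact hcut y hys r hrs h hr1.1
        · exact hx r hrs hr1.1

open Classical in
theorem join_insert_of_adj {A : V → V → Prop} {s : Finset V} {v w : V} (hv : v ∉ s) (hw : w ∈ s)
    (h : ∀ u ∈ s, A u v ∨ A v u) : Join A (insert v s) := by
  refine ⟨fun q => q = v, ⟨v, by simp, rfl⟩, ⟨w, by simp [hw], ?_⟩, ?_⟩
  · rintro rfl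
    exact hv hw
  · rintro y _ x hx rfl hxy
    exact (h x ((Finset.mem_insert.mp hx).resolve_left hxy)).symm

open Classical in
theorem cut_or_join_insert_of_join {A : V → V → Prop} (hO : IsOriented A)
    (hQ : QuasiTransitive A) {s : Finset V} {v : V} (hv : v ∉ s) (hJ : Join A s) :
    Cut A (insert v s) ∨ Join A (insert v s) := by
  by_contra hcon
  push Not at hcon
  obtain ⟨hC, hJ'⟩ := hcon
  obtain ⟨P, ⟨y0, hy0, hPy0⟩, ⟨x0, hx0, hPx0⟩, hP⟩ := hJ
  have hside : ∀ a b, CoConn A s a b → (P a ↔ P b) := by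
    intro a b h
    induction h with
    | refl => rfl
    | @tail b d _ hbd ih =>
      obtain ⟨hb, hd, h1, h2⟩ := hbd
      rw [ih]
      by_cases hPb : P b <;> by_cases hPd : P d
      · tauto
      · have := hP b hb d hd hPb hPd
        tauto
      · have := hP d hd b hb hPd hPb
        tauto
      · tauto
  -- Each component contains a non-neighbour of `v`, as otherwise it is joined to the rest.
  have hnon : ∀ p ∈ s, ∃ q, CoConn A s p q ∧ ¬ A q v ∧ ¬ A v q := by
    intro p hp
    by_contra hn
    push Not at hn
    refine hJ' ⟨fun q => CoConn A s p q, ⟨p, by simp [hp], .refl⟩,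
      ⟨v, by simp, fun h => hv (h.mem hp)⟩, ?_⟩
    intro y _ x hx hy1 hx1
    rcases Finset.mem_insert.mp hx with rfl | hxs
    · by_cases h : A y x
      · exact Or.inl h
      · exact Or.inr (hn y hy1 h)
    · exact hy1.adj hp hxs hx1
  have hout : ∃ a ∈ s, A v a := by
    by_contra hn
    push Not at hn
    refine hC ⟨fun q => q = v, ⟨v, by simp, rfl⟩,
      ⟨y0, by simp [hy0], fun h => hv (h ▸ hy0)⟩, ?_⟩
    rintro y _ x hx rfl hxy
    exact hn x ((Finset.mem_insert.mp hx).resolve_left hxy)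
  obtain ⟨a, ha, hva⟩ := hout
  -- All arcs between the component of `a` and the rest of `s` point towards the component.
  have hin : ∀ p ∈ s, ¬ CoConn A s a p → ∀ a', CoConn A s a a' → A p a' := by
    intro p hp hap a' haa'
    obtain ⟨q, hpq, hqv, hvq⟩ := hnon p hp
    have haq : ¬ CoConn A s a q := fun h => hap (h.trans hpq.symm)
    have hqs := hpq.mem hp
    have hqa : A q a := by
      rcases CoConn.adj (.refl : CoConn A s a a) ha hqs haq with h | h
      · rcases hQ _ _ _ hva h with rfl | h' | h'
        · exact absurd hqs hv
        · exact absurd h' hvq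
        · exact absurd h' hqv
      · exact h
    have hpa : A p a :=
      (coConn_uniform hO hQ hpq.symm hqs ha (fun h => haq h.symm)).2 hqa
    exact (coConn_uniform hO hQ haa' ha hp hap).1 hpa
  obtain ⟨w, hw, haw⟩ : ∃ w ∈ s, ¬ CoConn A s a w := by
    by_cases hPa : P a
    · exact ⟨x0, hx0, fun h => hPx0 ((hside _ _ h).mp hPa)⟩
    · exact ⟨y0, hy0, fun h => hPa ((hside _ _ h).mpr hPy0)⟩
  refine hC ⟨fun q => CoConn A s a q, ⟨a, by simp [ha], .refl⟩,
    ⟨w, by simp [hw], haw⟩, ?_⟩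
  intro b hb x hx hab hax hbx
  have hbs := hab.mem ha
  rcases Finset.mem_insert.mp hx with rfl | hxs
  -- An in-neighbour `b` of `v` in the component of `a` would point to a non-neighbour of `v`
  -- in another component.
  · obtain ⟨q, hwq, hqv, hvq⟩ := hnon w hw
    have haq : ¬ CoConn A s a q := fun h => haw (h.trans hwq.symm)
    have hqs := hwq.mem hw
    have hqb := hin q hqs haq b hab
    rcases hQ _ _ _ hqb hbx with rfl | h | h
    · exact hv hqs
    · exact hqv h
    · exact hvq h
  · exact hO _ _ hbx (hin x hxs hax b hab)

/-- A quasi-transitive oriented graph with at least two vertices is not strongly connected or has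
a disconnected non-adjacency graph. -/
theorem cut_or_join {A : V → V → Prop} (hO : IsOriented A) (hQ : QuasiTransitive A)
    (s : Finset V) : ∀ x ∈ s, ∀ y ∈ s, x ≠ y → Cut A s ∨ Join A s := by
  classical
  induction s using Finset.induction_on with
  | empty => simp
  | insert v s hv ih =>
    intro x hx y hy hxy
    by_cases hadj : ∀ u ∈ s, A u v ∨ A v u
    · right
      have : ∃ w, w ∈ s := by
        rcases Finset.mem_insert.mp hx with rfl | hxs
        · exact ⟨y, (Finset.mem_insert.mp hy).resolve_left (Ne.symm hxy)⟩
        · exact ⟨x, hxs⟩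
      obtain ⟨w, hw⟩ := this
      exact join_insert_of_adj hv hw hadj
    push Not at hadj
    obtain ⟨u, hu, h1, h2⟩ := hadj
    by_cases hone : ∃ w ∈ s, w ≠ u
    · obtain ⟨w, hw, hwu⟩ := hone
      rcases ih w hw u hu hwu with ⟨P, hY, hX, hcut⟩ | hJ
      · left
        by_cases hPu : P u
        · exact cut_insert_of_cut hQ hv P hX hcut hu hPu h1 h2
        · refine cut_of_flip (cut_insert_of_cut (quasiTransitive_flip hQ) hv
            (fun q => ¬ P q) (by simpa using hY) ?_ hu hPu h2 h1)
          exact fun y hy x hx h3 h4 => hcut x hx y hy (not_not.mp h4) h3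
      · exact cut_or_join_insert_of_join hO hQ hv hJ
    · push Not at hone
      left
      refine ⟨fun q => q = v, ⟨v, by simp, rfl⟩,
        ⟨u, by simp [hu], fun h => hv (h ▸ hu)⟩, ?_⟩
      rintro y _ x hx rfl hxy
      rw [hone x ((Finset.mem_insert.mp hx).resolve_left hxy)]
      exact h2

/-! ### Colourings -/

theorem Col.of_card_le {A : V → V → Prop} {s : Finset V} {C C' : Finset ℕ} (h : Col A s C)
    (hC : C.card ≤ C'.card) : Col A s C' := by
  classical
  obtain ⟨φ, h1, h2⟩ := h
  obtain ⟨D, hD, hDc⟩ := Finset.exists_subset_card_eq hC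
  let e : C ≃ D := Finset.equivOfCardEq hDc.symm
  refine ⟨fun v => if h : φ v ∈ C then e ⟨φ v, h⟩ else 0, ?_, ?_⟩
  · intro v hv
    simp only [h1 v hv, dif_pos]
    exact hD (e _).2
  · intro c v hv
    -- On `s`, the relabelled colour determines the original one.
    have hvP : v ∈ s ∧ (if h : φ v ∈ C then (e ⟨φ v, h⟩ : ℕ) else 0) = c := by
      obtain ⟨w, hw, _⟩ := Relation.TransGen.head'_iff.mp hv
      exact hw.2.1
    refine (h2 (φ v)).mono ?_ v hv
    rintro w ⟨hw, hwc⟩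
    refine ⟨hw, ?_⟩
    have h3 := hvP.2
    simp only [h1 w hw, h1 v hvP.1, dif_pos] at hwc h3
    have h4 := e.injective (Subtype.ext (hwc.trans h3.symm))
    exact congrArg Subtype.val h4

/-- Of two induced subdigraphs, one has dichromatic number at most that of the other. -/
theorem col_total (A : V → V → Prop) (s t : Finset V) :
    (∀ C, Col A s C → Col A t C) ∨ (∀ C, Col A t C → Col A s C) := by
  by_contra h
  push Not at h
  obtain ⟨⟨C, h1, h2⟩, D, h3, h4⟩ := h
  rcases le_total C.card D.card with h | h
  · exact h4 (h1.of_card_le h)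
  · exact h2 (h3.of_card_le h)

open Classical in
/-- Dicolourings of the two sides of a cut combine. -/
theorem col_of_cut {A : V → V → Prop} {s : Finset V} (P : V → Prop)
    (hcut : ∀ y ∈ s, ∀ x ∈ s, P y → ¬ P x → ¬ A y x) {C : Finset ℕ}
    (hY : Col A (s.filter P) C) (hX : Col A (s.filter (fun v => ¬ P v)) C) : Col A s C := by
  obtain ⟨φ, hφ, hφa⟩ := hY
  obtain ⟨ψ, hψ, hψa⟩ := hX
  refine ⟨fun v => if P v then φ v else ψ v, ?_, ?_⟩
  · intro v hv
    by_cases h : P v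
    · simpa [h] using hφ v (by simp [hv, h])
    · simpa [h] using hψ v (by simp [hv, h])
  · intro c
    have key : ∀ a b, Relation.TransGen
        (Arc A (fun v => v ∈ s ∧ (if P v then φ v else ψ v) = c)) a b →
        (P a → P b ∧ Relation.TransGen (Arc A (fun v => v ∈ s.filter P ∧ φ v = c)) a b) ∧
        (¬ P b → ¬ P a ∧ Relation.TransGen
          (Arc A (fun v => v ∈ s.filter (fun v => ¬ P v) ∧ ψ v = c)) a b) := by
      have step : ∀ a b, Arc A (fun v => v ∈ s ∧ (if P v then φ v else ψ v) = c) a b →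
          (P a → P b ∧ Arc A (fun v => v ∈ s.filter P ∧ φ v = c) a b) ∧
          (¬ P b → ¬ P a ∧ Arc A (fun v => v ∈ s.filter (fun v => ¬ P v) ∧ ψ v = c) a b) := by
        rintro a b ⟨hab, ⟨ha, hac⟩, hb, hbc⟩
        have := hcut a ha b hb
        by_cases hPa : P a <;> by_cases hPb : P b <;>
          simp_all [Arc]
      intro a b h
      induction h with
      | single h =>
        exact ⟨fun h1 => ⟨((step _ _ h).1 h1).1, .single ((step _ _ h).1 h1).2⟩,
          fun h1 => ⟨((step _ _ h).2 h1).1, .single ((step _ _ h).2 h1).2⟩⟩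
      | tail _ h ih =>
        refine ⟨fun h1 => ?_, fun h1 => ?_⟩
        · obtain ⟨h2, h3⟩ := ih.1 h1
          obtain ⟨h4, h5⟩ := (step _ _ h).1 h2
          exact ⟨h4, h3.tail h5⟩
        · obtain ⟨h2, h3⟩ := (step _ _ h).2 h1
          obtain ⟨h4, h5⟩ := ih.2 h2
          exact ⟨h4, h5.tail h3⟩
    intro v hv
    by_cases h : P v
    · exact hφa c v ((key v v hv).1 h).2
    · exact hψa c v ((key v v hv).2 h).2

open Classical in
/-- If `M` is a module of `s` and `t ⊆ M` has dichromatic number at least that of `M`, then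
replacing `M` by `t` does not lower the dichromatic number of `s`. -/
theorem col_of_module {A : V → V → Prop} {s M t : Finset V} (htM : t ⊆ M)
    (hin : ∀ p ∈ s, p ∉ M → ∀ m ∈ M, ∀ m' ∈ M, A p m → A p m')
    (hout : ∀ p ∈ s, p ∉ M → ∀ m ∈ M, ∀ m' ∈ M, A m p → A m' p)
    (ht : ∀ C, Col A t C → Col A M C) {C : Finset ℕ}
    (h : Col A (s \ M ∪ t) C) : Col A s C := by
  obtain ⟨φ, hφ, hφa⟩ := h
  obtain ⟨ψ, hψ, hψa⟩ : Col A M (t.image φ) :=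
    ht _ ⟨φ, fun v hv => Finset.mem_image_of_mem _ hv,
      fun c => (hφa c).mono (fun v hv => ⟨Finset.mem_union_right _ hv.1, hv.2⟩)⟩
  refine ⟨fun v => if v ∈ M then ψ v else φ v, ?_, ?_⟩
  · intro v hv
    by_cases hvM : v ∈ M
    · obtain ⟨x, hx, hxv⟩ := Finset.mem_image.mp (hψ v hvM)
      simp only [hvM, if_true, ← hxv]
      exact hφ x (Finset.mem_union_right _ hx)
    · simp only [hvM, if_false]
      exact hφ v (by simp [hv, hvM])
  · intro c
    by_cases hc : ∃ m ∈ M, ψ m = c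
    · obtain ⟨m, hm, hmc⟩ := hc
      obtain ⟨t0, ht0, ht0c⟩ := Finset.mem_image.mp (hψ m hm)
      rw [hmc] at ht0c
      have ht0M := htM ht0
      -- Contract `M` to the vertex `t0`, which has colour `c`: a monochromatic closed walk stays
      -- in `M` or becomes a closed walk avoiding `M \ t`.
      let f : V → V := fun v => if v ∈ M then t0 else v
      have fM : ∀ v, v ∈ M → f v = t0 := fun v hv => if_pos hv
      have fN : ∀ v, v ∉ M → f v = v := fun v hv => if_neg hv
      have step : ∀ a b, Arc A (fun v => v ∈ s ∧ (if v ∈ M then ψ v else φ v) = c) a b →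
          (a ∈ M ∧ b ∈ M ∧ Arc A (fun v => v ∈ M ∧ ψ v = c) a b) ∨
          Arc A (fun v => v ∈ s \ M ∪ t ∧ φ v = c) (f a) (f b) := by
        rintro a b ⟨hab, ⟨ha, hac⟩, hb, hbc⟩
        by_cases haM : a ∈ M <;> by_cases hbM : b ∈ M
        · simp only [haM, hbM, if_true] at hac hbc
          exact Or.inl ⟨haM, hbM, hab, ⟨haM, hac⟩, hbM, hbc⟩
        · simp only [hbM, if_false] at hbc
          right
          rw [fM a haM, fN b hbM]
          exact ⟨hout b hb hbM a haM t0 ht0M hab, ⟨by simp [ht0], ht0c⟩, by simp [hb, hbM], hbc⟩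
        · simp only [haM, if_false] at hac
          right
          rw [fN a haM, fM b hbM]
          exact ⟨hin a ha haM b hbM t0 ht0M hab, ⟨by simp [ha, haM], hac⟩, by simp [ht0], ht0c⟩
        · simp only [haM, hbM, if_false] at hac hbc
          right
          rw [fN a haM, fN b hbM]
          exact ⟨hab, ⟨by simp [ha, haM], hac⟩, by simp [hb, hbM], hbc⟩
      have key : ∀ a b, Relation.TransGen
          (Arc A (fun v => v ∈ s ∧ (if v ∈ M then ψ v else φ v) = c)) a b →
          (a ∈ M ∧ b ∈ M ∧ Relation.TransGen (Arc A (fun v => v ∈ M ∧ ψ v = c)) a b) ∨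
          Relation.TransGen (Arc A (fun v => v ∈ s \ M ∪ t ∧ φ v = c)) (f a) (f b) := by
        intro a b h
        induction h with
        | single h =>
          rcases step _ _ h with ⟨h1, h2, h3⟩ | h1
          · exact Or.inl ⟨h1, h2, .single h3⟩
          · exact Or.inr (.single h1)
        | @tail b d _ h ih =>
          rcases ih with ⟨h4, h5, h6⟩ | h4 <;> rcases step _ _ h with ⟨h1, h2, h3⟩ | h1
          · exact Or.inl ⟨h4, h2, h6.tail h3⟩
          · right
            rw [fM a h4, ← fM b h5]
            exact .single h1
          · right
            rw [fM d h2, ← fM b h1]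
            exact h4
          · exact Or.inr (h4.tail h1)
      intro v hv
      rcases key v v hv with ⟨_, _, h⟩ | h
      · exact hψa c v h
      · exact hφa c _ h
    · refine (hφa c).mono ?_
      rintro v ⟨hv, hvc⟩
      by_cases hvM : v ∈ M
      · simp only [hvM, if_true] at hvc
        exact absurd ⟨v, hvM, hvc⟩ hc
      · simp only [hvM, if_false] at hvc
        exact ⟨by simp [hv, hvM], hvc⟩

/-! ### The subtournament of the same dichromatic number -/

/-- A quasi-transitive oriented graph contains an induced tournament of the same dichromatic
number. -/
theorem exists_tournament {A : V → V → Prop} (hO : IsOriented A) (hQ : QuasiTransitive A)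
    (s : Finset V) : ∃ t ⊆ s, (∀ u ∈ t, ∀ v ∈ t, u ≠ v → A u v ∨ A v u) ∧
      ∀ C, Col A t C → Col A s C := by
  classical
  induction s using Finset.strongInduction with
  | H s ih =>
    by_cases hs : ∀ u ∈ s, ∀ v ∈ s, u ≠ v → A u v ∨ A v u
    · exact ⟨s, subset_rfl, hs, fun _ h => h⟩
    push Not at hs
    obtain ⟨x, hx, y, hy, hxy, h1, h2⟩ := hs
    rcases cut_or_join hO hQ s x hx y hy hxy with
      ⟨P, ⟨y0, hy0, hPy0⟩, ⟨x0, hx0, hPx0⟩, hcut⟩ | ⟨P, ⟨y0, hy0, hPy0⟩, ⟨x0, hx0, hPx0⟩, hP⟩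
    · obtain ⟨t1, ht1, hT1, hC1⟩ := ih (s.filter P)
        (Finset.filter_ssubset.mpr ⟨x0, hx0, hPx0⟩)
      obtain ⟨t2, ht2, hT2, hC2⟩ := ih (s.filter (fun v => ¬ P v))
        (Finset.filter_ssubset.mpr ⟨y0, hy0, not_not.mpr hPy0⟩)
      rcases col_total A t1 t2 with h | h
      · exact ⟨t1, ht1.trans (Finset.filter_subset _ _), hT1,
          fun C hC => col_of_cut P hcut (hC1 C hC) (hC2 C (h C hC))⟩
      · exact ⟨t2, ht2.trans (Finset.filter_subset _ _), hT2,
          fun C hC => col_of_cut P hcut (hC1 C (h C hC)) (hC2 C hC)⟩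
    · -- The component of `x` in the non-adjacency graph contains `y`, so it is no tournament.
      let M := s.filter (fun v => CoConn A s x v)
      have hside : ∀ b, CoConn A s x b → (P x ↔ P b) := by
        intro b h
        induction h with
        | refl => rfl
        | @tail b d _ hbd ih =>
          obtain ⟨hb, hd, h1, h2⟩ := hbd
          rw [ih]
          by_cases hPb : P b <;> by_cases hPd : P d
          · tauto
          · have := hP b hb d hd hPb hPd
            tauto
          · have := hP d hd b hb hPd hPb
            tauto
          · tauto
      have hMs : M ⊂ s := by
        refine Finset.filter_ssubset.mpr ?_
        by_cases hPx : P x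
        · exact ⟨x0, hx0, fun h => hPx0 ((hside _ h).mp hPx)⟩
        · exact ⟨y0, hy0, fun h => hPx ((hside _ h).mpr hPy0)⟩
      have hmem : ∀ v, v ∈ M ↔ v ∈ s ∧ CoConn A s x v := fun v => Finset.mem_filter
      have hxM : x ∈ M := (hmem x).mpr ⟨hx, .refl⟩
      have hyM : y ∈ M := (hmem y).mpr ⟨hy, .single ⟨hx, hy, h1, h2⟩⟩
      obtain ⟨t, htM, hT, hC⟩ := ih M hMs
      have hss : s \ M ∪ t ⊂ s := by
        refine Finset.ssubset_iff_subset_ne.mpr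
          ⟨Finset.union_subset Finset.sdiff_subset (htM.trans hMs.1), fun heq => ?_⟩
        have hmt : ∀ v ∈ M, v ∈ t := by
          intro v hv
          have : v ∈ s \ M ∪ t := by
            rw [heq]
            exact hMs.1 hv
          simpa [hv] using this
        rcases hT x (hmt x hxM) y (hmt y hyM) hxy with h | h
        · exact h1 h
        · exact h2 h
      obtain ⟨r, hr, hTr, hCr⟩ := ih _ hss
      refine ⟨r, hr.trans hss.1, hTr, fun C hC' => col_of_module htM ?_ ?_ hC (hCr C hC')⟩
      all_goals
        intro p hp hpM m hm m' hm'
        have hm1 := ((hmem m).mp hm).2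
        have hm2 := ((hmem m').mp hm').2
        have hu := coConn_uniform hO hQ (hm1.symm.trans hm2) (hm1.mem hx) hp
          (fun h => hpM ((hmem p).mpr ⟨hp, hm1.trans h⟩))
      · exact hu.1
      · exact hu.2

/-! ### Transfer to `dichrom` -/

/-- A finite oriented graph has a dicolouring with `dichrom A` colours, so that the infimum
defining `dichrom` is attained. -/
theorem exists_good_dichrom [Fintype V] {A : V → V → Prop} (hO : IsOriented A) :
    ∃ φ : V → Fin (dichrom A), GoodColouring A φ := by
  have hne : {k : ℕ | ∃ φ : V → Fin k, GoodColouring A φ}.Nonempty := by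
    refine ⟨Fintype.card V, Fintype.equivFin V, ?_⟩
    intro c v _ h
    obtain ⟨w, hw, _⟩ := Relation.TransGen.head'_iff.mp h
    have : v = w := (Fintype.equivFin V).injective (hw.2.1.trans hw.2.2.symm)
    subst this
    exact hO _ _ hw.1 hw.1
  exact Nat.sInf_mem hne

theorem dichrom_le_of_col [Fintype V] {A : V → V → Prop} {c : ℕ}
    (h : Col A Finset.univ (Finset.range c)) : dichrom A ≤ c := by
  obtain ⟨φ, h1, h2⟩ := h
  refine Nat.sInf_le ⟨fun v => ⟨φ v, Finset.mem_range.mp (h1 v (Finset.mem_univ v))⟩, ?_⟩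
  intro i v _ hv
  refine h2 i v (Relation.TransGen.mono ?_ v v hv)
  rintro a b ⟨hab, ha, hb⟩
  exact ⟨hab, ⟨Finset.mem_univ _, congrArg Fin.val ha⟩, Finset.mem_univ _, congrArg Fin.val hb⟩

theorem col_of_dichrom_le {A : V → V → Prop} (hO : IsOriented A) {t : Finset V} {c : ℕ}
    (h : dichrom (fun a b : t => A a b) ≤ c) : Col A t (Finset.range c) := by
  classical
  obtain ⟨φ, hφ⟩ := exists_good_dichrom (A := fun a b : t => A a b) (fun a b => hO a b)
  refine ⟨fun v => if hv : v ∈ t then φ ⟨v, hv⟩ else 0, ?_, ?_⟩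
  · intro v hv
    simp only [hv, dif_pos]
    exact Finset.mem_range.mpr ((φ ⟨v, hv⟩).2.trans_le h)
  · intro i v hv
    obtain ⟨w, hw, _⟩ := Relation.TransGen.head'_iff.mp hv
    obtain ⟨hvt, hvi⟩ := hw.2.1
    simp only [hvt, dif_pos] at hvi
    -- Closed walks in `t` lift to the subtype.
    have key : ∀ b, Relation.TransGen
        (Arc A (fun v => v ∈ t ∧ (if hv : v ∈ t then (φ ⟨v, hv⟩ : ℕ) else 0) = i)) v b →
        ∃ hb : b ∈ t, Relation.TransGen
          (fun a b : t => A a b ∧ φ a = φ ⟨v, hvt⟩ ∧ φ b = φ ⟨v, hvt⟩) ⟨v, hvt⟩ ⟨b, hb⟩ := by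
      have col : ∀ b (hb : b ∈ t),
          (if hv : b ∈ t then (φ ⟨b, hv⟩ : ℕ) else 0) = i → φ ⟨b, hb⟩ = φ ⟨v, hvt⟩ := by
        intro b hb hbi
        simp only [hb, dif_pos] at hbi
        exact Fin.ext (hbi.trans hvi.symm)
      intro b hb
      induction hb with
      | single h =>
        obtain ⟨hab, _, hb, hbi⟩ := h
        exact ⟨hb, .single ⟨hab, rfl, col _ hb hbi⟩⟩
      | tail _ h ih =>
        obtain ⟨hb, hT⟩ := ih
        obtain ⟨hab, ⟨_, hbi⟩, hd, hdi⟩ := h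
        exact ⟨hd, hT.tail ⟨hab, col _ hb hbi, col _ hd hdi⟩⟩
    obtain ⟨_, hT⟩ := key v hv
    exact hφ _ _ rfl hT

end QT

theorem stmt4 {W : Type} [Fintype W] (B : W → W → Prop) (c : ℕ) (hc : 0 < c)
    (htour : ∀ (U : Type) [Fintype U] (T : U → U → Prop),
      IsTournament T → ¬ HasInducedCopy T B → dichrom T ≤ c) :
    ∀ (V : Type) [Fintype V] (A : V → V → Prop),
      IsOriented A → QuasiTransitive A → ¬ HasInducedCopy A B → dichrom A ≤ c := by
  intro V _ A hO hQ hB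
  obtain ⟨t, _, hT, hC⟩ := QT.exists_tournament hO hQ Finset.univ
  refine QT.dichrom_le_of_col (hC _ (QT.col_of_dichrom_le hO (htour t _ ⟨?_, ?_⟩ ?_)))
  · exact fun u v => hO u v
  · exact fun u v huv => hT u u.2 v v.2 (fun h => huv (Subtype.ext h))
  · rintro ⟨f, hf, hfB⟩
    exact hB ⟨fun w => f w, fun a b h => hf (Subtype.ext h), hfB⟩
end

section
/- Let H1, H2, F be digraphs. Suppose that (i) there is a constant bounding the dichromatic number of every oriented graph that has no induced subdigraph isomorphic to F and no induced subdigraph isomorphic to H1 ⇒ H2, and (ii) for each i ∈ {1,2}, there is a constant bounding the dichromatic number of every oriented graph that has no induced subdigraph isomorphic to K1 + F and no induced subdigraph isomorphic to Hi. Then there is a constant bounding the dichromatic number of every oriented graph that has no induced subdigraph isomorphic to K1 + F and no induced subdigraph isomorphic to H1 ⇒ H2. -/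
/-- `H1 ⇒ H2`: disjoint union plus all arcs from `H1` to `H2`. -/
def seqJoin {W1 W2 : Type} (B1 : W1 → W1 → Prop) (B2 : W2 → W2 → Prop) :
    W1 ⊕ W2 → W1 ⊕ W2 → Prop
  | Sum.inl a, Sum.inl b => B1 a b
  | Sum.inr a, Sum.inr b => B2 a b
  | Sum.inl _, Sum.inr _ => True
  | Sum.inr _, Sum.inl _ => False

/-- `K1 + F`: disjoint union of a single (isolated) vertex and `F`. -/
def addIsolated {W : Type} (B : W → W → Prop) : Option W → Option W → Prop
  | some a, some b => B a b
  | _, _ => False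

/-! ### Dicolourings of vertex subsets -/

/-- The subdigraph induced on `S` has a dicolouring with colours `0, …, k - 1`. Colours are given to
all vertices, but only those of `S` matter. -/
def Col {V : Type} (A : V → V → Prop) (S : Set V) (k : ℕ) : Prop :=
  ∃ φ : V → ℕ, (∀ v ∈ S, φ v < k) ∧
    ∀ v, ¬ Relation.TransGen (fun a b => A a b ∧ a ∈ S ∧ b ∈ S ∧ φ a = φ b) v v

/-- A property preserved along the steps of a chain may be used to change the relation. -/
lemma transGen_of_invariant {V : Type} {r r' : V → V → Prop} {P : V → Prop}
    (h : ∀ a b, P a → r a b → r' a b ∧ P b) {v w : V} (hv : P v)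
    (hvw : Relation.TransGen r v w) : Relation.TransGen r' v w ∧ P w := by
  induction hvw with
  | single hb => exact ⟨.single (h _ _ hv hb).1, (h _ _ hv hb).2⟩
  | tail _ hbc ih => exact ⟨ih.1.tail (h _ _ ih.2 hbc).1, (h _ _ ih.2 hbc).2⟩

lemma Col.mono {V : Type} {A : V → V → Prop} {S T : Set V} {k m : ℕ} (h : Col A T k)
    (hST : S ⊆ T) (hkm : k ≤ m) : Col A S m := by
  obtain ⟨φ, h1, h2⟩ := h
  refine ⟨φ, fun v hv => (h1 v (hST hv)).trans_le hkm, fun v hv => h2 v ?_⟩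
  exact Relation.TransGen.mono (fun a b ⟨x, y, z, w⟩ => ⟨x, hST y, hST z, w⟩) _ _ hv

lemma Col.empty {V : Type} (A : V → V → Prop) : Col A ∅ 0 := by
  refine ⟨fun _ => 0, fun v hv => hv.elim, fun v hv => ?_⟩
  obtain ⟨b, hb, -⟩ := (Relation.TransGen.head'_iff).1 hv
  exact hb.2.1

lemma Col.singleton {V : Type} {A : V → V → Prop} (hA : IsOriented A) (v : V) :
    Col A {v} 1 := by
  refine ⟨fun _ => 0, fun _ _ => Nat.one_pos, fun u hu => ?_⟩
  obtain ⟨b, ⟨h, h1, h2, -⟩, -⟩ := (Relation.TransGen.head'_iff).1 hu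
  obtain rfl : u = v := h1
  obtain rfl : b = u := h2
  exact hA _ _ h h

lemma Col.union {V : Type} {A : V → V → Prop} {S T : Set V} {k m : ℕ} (hS : Col A S k)
    (hT : Col A T m) : Col A (S ∪ T) (k + m) := by
  classical
  obtain ⟨φ, h1, h2⟩ := hS
  obtain ⟨ψ, h3, h4⟩ := hT
  refine ⟨fun v => if v ∈ S then φ v else k + ψ v, fun v hv => ?_, fun v hv => ?_⟩
  · by_cases h : v ∈ S
    · have := h1 v h
      simp only [h, if_true]; omega
    · have := h3 v (hv.resolve_left h)
      simp only [h, if_false]; omega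
  · by_cases h : v ∈ S
    · refine h2 v (transGen_of_invariant (P := fun v => v ∈ S) ?_ h hv).1
      rintro a b ha ⟨hab, -, -, he⟩
      have hka := h1 a ha
      by_cases hb : b ∈ S
      · simp only [ha, hb, if_true] at he
        exact ⟨⟨hab, ha, hb, he⟩, hb⟩
      · simp only [ha, hb, if_true, if_false] at he
        omega
    · refine h4 v (transGen_of_invariant (P := fun v => v ∉ S) ?_ h hv).1
      rintro a b ha ⟨hab, haS, hbS, he⟩
      by_cases hb : b ∈ S
      · have hkb := h1 b hb
        simp only [ha, hb, if_true, if_false] at he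
        omega
      · simp only [ha, hb, if_false] at he
        exact ⟨⟨hab, haS.resolve_left ha, hbS.resolve_left hb, by omega⟩, hb⟩

lemma Col.biUnion {V ι : Type} {A : V → V → Prop} (X : Finset ι) (U : ι → Set V) {m : ℕ}
    (h : ∀ x ∈ X, Col A (U x) m) : Col A (⋃ x ∈ X, U x) (X.card * m) := by
  classical
  induction X using Finset.induction_on with
  | empty => simpa using Col.empty A
  | insert a s ha ih =>
    rw [Finset.set_biUnion_insert, Finset.card_insert_of_notMem ha, Nat.succ_mul, Nat.add_comm]
    exact (h a (by simp)).union (ih fun x hx => h x (by simp [hx]))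

/-- A set covered by a `c`-dicolourable set and `p` sets that are `m`-dicolourable. -/
lemma Col.cover {V : Type} {A : V → V → Prop} {X : Finset V} {U : V → Set V} {T C : Set V}
    {p m c : ℕ} (hX : X.card ≤ p) (hC : Col A C c) (hU : ∀ x ∈ X, Col A (U x) m)
    (hT : ∀ v ∈ T, v ∈ C ∨ ∃ x ∈ X, v ∈ U x) : Col A T (p * m + c) := by
  refine ((Col.biUnion X U hU).union hC).mono (fun v hv => ?_)
    (Nat.add_le_add_right (Nat.mul_le_mul_right m hX) c)
  rcases hT v hv with h | ⟨x, hx, h⟩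
  · exact Or.inr h
  · exact Or.inl (Set.mem_biUnion hx h)

/-- A dicolouring with `k + 1` colours that misses one of them on `S` can be turned into one with
`k` colours. -/
lemma Col.of_missing {V : Type} {A : V → V → Prop} {S : Set V} {k j : ℕ} {φ : V → ℕ}
    (h1 : ∀ v ∈ S, φ v < k + 1)
    (h2 : ∀ v, ¬ Relation.TransGen (fun a b => A a b ∧ a ∈ S ∧ b ∈ S ∧ φ a = φ b) v v)
    (hj : j < k + 1) (hm : ∀ v ∈ S, φ v ≠ j) : Col A S k := by
  refine ⟨fun v => if φ v = k then j else φ v, fun v hv => ?_, fun v hv => h2 v ?_⟩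
  · have := h1 v hv
    have := hm v hv
    dsimp only
    split_ifs <;> omega
  · refine Relation.TransGen.mono (fun a b ⟨x, y, z, w⟩ => ⟨x, y, z, ?_⟩) _ _ hv
    have := hm a y
    have := hm b z
    dsimp only at w
    split_ifs at w <;> omega

/-! ### The abstract setting -/

/-- The properties of an oriented graph without induced `K1 + F` and `H1 ⇒ H2` on which the
argument rests. The non-neighbourhood of `v` is taken to contain `v`. -/
structure Setting {V : Type} (A : V → V → Prop) (c p q : ℕ) : Prop where
  oriented : IsOriented A
  non : ∀ v, Col A {w | ¬ A v w ∧ ¬ A w v} c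
  outSet : ∀ S, ¬ Col A S c →
    ∃ X : Finset V, X.card ≤ p ∧ ↑X ⊆ S ∧ Col A {w | ∀ x ∈ X, A x w} c
  inSet : ∀ S, ¬ Col A S c →
    ∃ Y : Finset V, Y.card ≤ q ∧ ↑Y ⊆ S ∧ Col A {w | ∀ y ∈ Y, A w y} c

section
variable {V : Type} {A : V → V → Prop} {c p q : ℕ}

/-- If every vertex of `S` has small in-neighbourhood in `T`, then `S` or `T` is small. -/
lemma Setting.of_small_in (h : Setting A c p q) {S T : Set V} {k : ℕ}
    (hk : ∀ x ∈ S, Col A (T ∩ {w | A w x}) k) (hT : ¬ Col A T (p * (k + c) + c)) :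
    Col A S c := by
  by_contra hS
  obtain ⟨X, hXp, hXS, hX⟩ := h.outSet S hS
  refine hT (Col.cover hXp hX (U := fun x => (T ∩ {w | A w x}) ∪ {w | ¬ A x w ∧ ¬ A w x})
    (fun x hx => (hk x (hXS hx)).union (h.non x)) fun v hv => ?_)
  by_cases hv' : ∀ x ∈ X, A x v
  · exact Or.inl hv'
  · push Not at hv'
    obtain ⟨x, hx, hxv⟩ := hv'
    refine Or.inr ⟨x, hx, ?_⟩
    by_cases hvx : A v x
    · exact Or.inl ⟨hv, hvx⟩
    · exact Or.inr ⟨hxv, hvx⟩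

/-- If every vertex of `S` has small out-neighbourhood in `T`, then `S` or `T` is small. -/
lemma Setting.of_small_out (h : Setting A c p q) {S T : Set V} {k : ℕ}
    (hk : ∀ y ∈ S, Col A (T ∩ {w | A y w}) k) (hT : ¬ Col A T (q * (k + c) + c)) :
    Col A S c := by
  by_contra hS
  obtain ⟨Y, hYq, hYS, hY⟩ := h.inSet S hS
  refine hT (Col.cover hYq hY (U := fun y => (T ∩ {w | A y w}) ∪ {w | ¬ A y w ∧ ¬ A w y})
    (fun y hy => (hk y (hYS hy)).union (h.non y)) fun v hv => ?_)
  by_cases hv' : ∀ y ∈ Y, A v y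
  · exact Or.inl hv'
  · push Not at hv'
    obtain ⟨y, hy, hyv⟩ := hv'
    refine Or.inr ⟨y, hy, ?_⟩
    by_cases hvy : A y v
    · exact Or.inl ⟨hv, hvy⟩
    · exact Or.inr ⟨hvy, hyv⟩

end

/-! ### Heavy arcs and small subsets of large dichromatic number -/

/-- Here `E` plays the role of the heavy arcs: if light out-neighbourhoods are small throughout `G`,
then large subsets of `G` contain `m` vertices pairwise joined by heavy arcs. -/
lemma exists_heavy_clique (c p q m : ℕ) : ∃ t : ℕ, ∀ (V : Type) (A E : V → V → Prop) (G : Set V),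
    Setting A c p q → (∀ v ∈ G, Col A (G ∩ {y | A v y ∧ ¬ E v y}) c) →
    ∀ S ⊆ G, ¬ Col A S t → ∃ K : Finset V, K.card = m ∧ ↑K ⊆ S ∧
      ∀ u ∈ K, ∀ v ∈ K, u ≠ v → (A u v ∧ E u v) ∨ (A v u ∧ E v u) := by
  classical
  induction m with
  | zero => exact ⟨0, fun V A E G _ _ S _ _ => ⟨∅, by simp⟩⟩
  | succ m ih =>
    obtain ⟨t, ht⟩ := ih
    refine ⟨q * ((t + c) + c) + c, fun V A E G h hG S hS hc => ?_⟩
    have hex : ∃ y ∈ S, ¬ Col A (S ∩ {w | A y w}) (t + c) := by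
      by_contra! hn
      exact hc ((h.of_small_out hn hc).mono subset_rfl (by omega))
    obtain ⟨y, hyS, hy⟩ := hex
    have hlarge : ¬ Col A (S ∩ {w | A y w ∧ E y w}) t := by
      intro hcol
      refine hy ((hcol.union (hG y (hS hyS))).mono ?_ le_rfl)
      rintro w ⟨hw, hyw⟩
      by_cases he : E y w
      · exact Or.inl ⟨hw, hyw, he⟩
      · exact Or.inr ⟨hS hw, hyw, he⟩
    obtain ⟨K, hK, hKS, hKE⟩ := ht V A E G h hG _ (Set.inter_subset_left.trans hS) hlarge
    have hyK : y ∉ K := fun hy' => h.oriented _ _ (hKS hy').2.1 (hKS hy').2.1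
    refine ⟨insert y K, by rw [Finset.card_insert_of_notMem hyK, hK], ?_, ?_⟩
    · intro w hw
      rcases Finset.mem_insert.1 hw with rfl | hw
      · exact hyS
      · exact (hKS hw).1
    · intro u hu v hv huv
      rcases Finset.mem_insert.1 hu with rfl | huK <;>
        rcases Finset.mem_insert.1 hv with rfl | hvK
      · exact absurd rfl huv
      · exact Or.inl (hKS hvK).2
      · exact Or.inr (hKS huK).2
      · exact hKE u huK v hvK huv

/-- Sets of large dichromatic number have subsets of bounded size with dichromatic number more
than `r`. -/
lemma exists_small (c p q r : ℕ) : ∃ n l : ℕ, ∀ (V : Type) (A : V → V → Prop), Setting A c p q →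
    ∀ S : Set V, ¬ Col A S l → ∃ M : Finset V, M.card ≤ n ∧ ↑M ⊆ S ∧ ¬ Col A (↑M) r := by
  classical
  induction r with
  | zero =>
    refine ⟨1, 0, fun V A _ S hS => ?_⟩
    rcases S.eq_empty_or_nonempty with rfl | ⟨v, hv⟩
    · exact absurd (Col.empty A) hS
    · refine ⟨{v}, by simp, by simpa using hv, ?_⟩
      rintro ⟨φ, h1, -⟩
      exact Nat.not_lt_zero _ (h1 v (by simp))
  | succ r ih =>
    obtain ⟨n, l, hnl⟩ := ih
    obtain ⟨t, ht⟩ := exists_heavy_clique c p q (r + 2)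
    -- In-neighbourhoods are large when not `k`-dicolourable, which makes light
    -- out-neighbourhoods small.
    set k := q * (l + c) + c with hk
    refine ⟨(r + 2) + (r + 2) * (r + 2) * n, (p * (k + c) + c) + (t + c),
      fun V A h S hS => ?_⟩
    set R : Set V := {v | v ∈ S ∧ Col A (S ∩ {w | A w v}) k} with hR
    have hRc : Col A R c := h.of_small_in (fun x hx => hx.2)
      fun hc => hS (hc.mono subset_rfl (by omega))
    have hG : ¬ Col A (S \ R) t := by
      intro hc
      refine hS ((hc.union hRc).mono ?_ (by omega))
      intro v hv
      by_cases hvR : v ∈ R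
      · exact Or.inr hvR
      · exact Or.inl ⟨hv, hvR⟩
    let E : V → V → Prop := fun u v => ¬ Col A (S ∩ {w | A v w ∧ A w u}) l
    have hlight : ∀ v ∈ S \ R, Col A ((S \ R) ∩ {y | A v y ∧ ¬ E v y}) c := by
      rintro v ⟨hvS, hvR⟩
      refine h.of_small_out (T := S ∩ {w | A w v}) (k := l) ?_ fun hc => hvR ⟨hvS, hc⟩
      rintro y ⟨-, -, hy⟩
      refine (not_not.1 hy).mono ?_ le_rfl
      rintro w ⟨⟨hw, hwv⟩, hyw⟩
      exact ⟨hw, hyw, hwv⟩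
    obtain ⟨K, hK, hKS, hKE⟩ := ht V A E _ h hlight _ subset_rfl hG
    have hM : ∀ e : V × V, ∃ M : Finset V, M.card ≤ n ∧ ↑M ⊆ S ∧
        (E e.1 e.2 → (∀ w ∈ M, A e.2 w ∧ A w e.1) ∧ ¬ Col A (↑M) r) := by
      intro e
      by_cases he : E e.1 e.2
      · obtain ⟨M, h1, h2, h3⟩ := hnl V A h _ he
        exact ⟨M, h1, fun w hw => (h2 hw).1, fun _ => ⟨fun w hw => (h2 hw).2, h3⟩⟩
      · exact ⟨∅, by simp, by simp, fun h => absurd h he⟩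
    choose M hMn hMS hME using hM
    refine ⟨K ∪ (K ×ˢ K).biUnion M, ?_, ?_, ?_⟩
    · refine (Finset.card_union_le _ _).trans (Nat.add_le_add hK.le ?_)
      refine (Finset.card_biUnion_le_card_mul _ _ n fun e _ => hMn e).trans ?_
      rw [Finset.card_product, hK]
    · intro w hw
      rcases Finset.mem_union.1 hw with hw | hw
      · exact (hKS hw).1
      · obtain ⟨e, -, hw⟩ := Finset.mem_biUnion.1 hw
        exact hMS e hw
    · rintro ⟨φ, h1, h2⟩
      have key : ∀ u ∈ K, ∀ v ∈ K, φ u = φ v → A u v → E u v → False := by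
        intro u hu v hv huv hA hE
        obtain ⟨hw, hcol⟩ := hME (u, v) hE
        have hsub : M (u, v) ⊆ K ∪ (K ×ˢ K).biUnion M := fun w hw =>
          Finset.mem_union_right _
            (Finset.mem_biUnion.2 ⟨(u, v), Finset.mem_product.2 ⟨hu, hv⟩, hw⟩)
        have hu' := Finset.mem_union_left ((K ×ˢ K).biUnion M) hu
        have hv' := Finset.mem_union_left ((K ×ˢ K).biUnion M) hv
        have hex : ∃ w ∈ M (u, v), φ w = φ u := by
          by_contra! hn
          refine hcol (Col.of_missing (φ := φ) (fun w hw => h1 w (hsub hw)) (fun w hw => h2 w ?_)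
            (h1 u hu') hn)
          exact Relation.TransGen.mono (fun a b ⟨x, y, z, w⟩ => ⟨x, hsub y, hsub z, w⟩) _ _ hw
        obtain ⟨w, hwM, hwu⟩ := hex
        have hw' := hsub hwM
        exact h2 u (((Relation.TransGen.single ⟨hA, hu', hv', huv⟩).tail
          ⟨(hw w hwM).1, hv', hw', by omega⟩).tail ⟨(hw w hwM).2, hw', hu', hwu⟩)
      obtain ⟨u, hu, v, hv, huv, he⟩ := Finset.exists_ne_map_eq_of_card_lt_of_maps_to
        (s := K) (t := Finset.range (r + 1)) (f := φ) (by simp [hK]) (fun v hv =>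
          Finset.mem_coe.2 (Finset.mem_range.2 (h1 v (Finset.mem_union_left _ hv))))
      rcases hKE u hu v hv huv with ⟨ha, hE⟩ | ⟨ha, hE⟩
      · exact key u hu v hv he ha hE
      · exact key v hv u hu he.symm ha hE

/-! ### Bounding the dichromatic number -/

lemma Setting.bounded (c p q : ℕ) : ∃ b : ℕ, ∀ (V : Type) (A : V → V → Prop), Setting A c p q →
    Col A Set.univ b := by
  classical
  obtain ⟨n, l, hnl⟩ := exists_small c p q (c + c + c)
  refine ⟨l + 2 ^ n * (c + c), fun V A h => ?_⟩
  by_cases hl : Col A Set.univ l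
  · exact hl.mono subset_rfl (by omega)
  obtain ⟨M, hMn, -, hM⟩ := hnl V A h _ hl
  let I : Finset V → Set V := fun Y => {w | (∀ y ∈ Y, A w y) ∧ Col A {w | ∀ y ∈ Y, A w y} c}
  let O : Finset V → Set V := fun X => {w | (∀ x ∈ X, A x w) ∧ Col A {w | ∀ x ∈ X, A x w} c}
  have hI : ∀ Y, Col A (I Y) c := by
    intro Y
    by_cases hY : Col A {w | ∀ y ∈ Y, A w y} c
    · exact hY.mono (fun w hw => hw.1) le_rfl
    · exact (Col.empty A).mono (fun w hw => hY hw.2) (Nat.zero_le _)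
  have hO : ∀ X, Col A (O X) c := by
    intro X
    by_cases hX : Col A {w | ∀ x ∈ X, A x w} c
    · exact hX.mono (fun w hw => hw.1) le_rfl
    · exact (Col.empty A).mono (fun w hw => hX hw.2) (Nat.zero_le _)
  refine (Col.biUnion M.powerset (fun X => I X ∪ O X) fun X _ => (hI X).union (hO X)).mono ?_ ?_
  · intro v _
    by_cases hout : Col A (↑M ∩ {w | A v w}) c
    · by_cases hin : Col A (↑M ∩ {w | A w v}) c
      · refine absurd (((hout.union hin).union (h.non v)).mono ?_ le_rfl) hM
        intro w hw
        by_cases h1 : A v w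
        · exact Or.inl (Or.inl ⟨hw, h1⟩)
        · by_cases h2 : A w v
          · exact Or.inl (Or.inr ⟨hw, h2⟩)
          · exact Or.inr ⟨h1, h2⟩
      · obtain ⟨X, -, hXS, hX⟩ := h.outSet _ hin
        exact Set.mem_biUnion (Finset.mem_coe.2 (Finset.mem_powerset.2 fun x hx => (hXS hx).1))
          (Or.inr ⟨fun x hx => (hXS hx).2, hX⟩)
    · obtain ⟨Y, -, hYS, hY⟩ := h.inSet _ hout
      exact Set.mem_biUnion (Finset.mem_coe.2 (Finset.mem_powerset.2 fun x hx => (hYS hx).1))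
        (Or.inl ⟨fun x hx => (hYS hx).2, hY⟩)
  · rw [Finset.card_powerset]
    have := Nat.mul_le_mul_right (c + c) (Nat.pow_le_pow_right (n := 2) (by norm_num) hMn)
    omega

/-! ### Passing between `dichrom` and `Col` -/

lemma dichrom_le_of_col {V : Type} {A : V → V → Prop} {k : ℕ} (h : Col A Set.univ k) :
    dichrom A ≤ k := by
  obtain ⟨φ, h1, h2⟩ := h
  refine Nat.sInf_le ⟨fun v => ⟨φ v, h1 v trivial⟩, fun i v _ hv => h2 v ?_⟩
  refine Relation.TransGen.mono (fun a b ⟨x, y, z⟩ => ⟨x, trivial, trivial, ?_⟩) _ _ hv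
  exact congrArg Fin.val (y.trans z.symm)

/-- Finiteness guarantees that the infimum defining `dichrom` is attained. -/
lemma col_of_dichrom_le {V : Type} [Fintype V] {A : V → V → Prop} (hA : IsOriented A)
    {S : Set V} {k : ℕ} (h : dichrom (fun a b : S => A a b) ≤ k) : Col A S k := by
  classical
  have hne : {k : ℕ | ∃ φ : S → Fin k, GoodColouring (fun a b : S => A a b) φ}.Nonempty := by
    refine ⟨Fintype.card S, Fintype.equivFin S, fun i v _ hv => ?_⟩
    obtain ⟨b, ⟨hb, h1, h2⟩, -⟩ := (Relation.TransGen.head'_iff).1 hv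
    obtain rfl : v = b := (Fintype.equivFin S).injective (h1.trans h2.symm)
    exact hA _ _ hb hb
  obtain ⟨φ, hφ⟩ := Nat.sInf_mem hne
  change S → Fin (dichrom fun a b : S => A a b) at φ
  refine ⟨fun v => if hv : v ∈ S then (φ ⟨v, hv⟩ : ℕ) else 0, fun v hv => ?_, fun v hv => ?_⟩
  · simp only [hv, dif_pos]
    exact (φ ⟨v, hv⟩).2.trans_le h
  · have hvS : v ∈ S := by
      obtain ⟨b, hb, -⟩ := (Relation.TransGen.head'_iff).1 hv
      exact hb.2.1
    have lift : ∀ w, Relation.TransGen (fun a b => A a b ∧ a ∈ S ∧ b ∈ S ∧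
        (if hv : a ∈ S then (φ ⟨a, hv⟩ : ℕ) else 0) = if hv : b ∈ S then (φ ⟨b, hv⟩ : ℕ) else 0)
          v w → ∃ hw : w ∈ S, φ ⟨w, hw⟩ = φ ⟨v, hvS⟩ ∧ Relation.TransGen (fun a b : S => A a b ∧
            φ a = φ ⟨v, hvS⟩ ∧ φ b = φ ⟨v, hvS⟩) ⟨v, hvS⟩ ⟨w, hw⟩ := by
      intro w hw
      induction hw with
      | single hb =>
        obtain ⟨hab, -, hb, he⟩ := hb
        simp only [hvS, hb, dif_pos] at he
        exact ⟨hb, (Fin.ext he).symm, .single ⟨hab, rfl, (Fin.ext he).symm⟩⟩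
      | tail _ hbc ih =>
        obtain ⟨hb', hφb, ht⟩ := ih
        obtain ⟨hab, -, hc, he⟩ := hbc
        simp only [hb', hc, dif_pos] at he
        have he' := (Fin.ext he).symm.trans hφb
        exact ⟨hc, he', ht.tail ⟨hab, hφb, he'⟩⟩
    obtain ⟨_, -, ht⟩ := lift v hv
    exact hφ _ _ rfl ht

/-- A copy inside an induced subdigraph on `S`, as a copy with values in `S`. -/
lemma hasInducedCopy_subtype {V W : Type} {A : V → V → Prop} {B : W → W → Prop} {S : Set V}
    (h : HasInducedCopy (fun a b : S => A a b) B) :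
    ∃ f : W → V, Function.Injective f ∧ (∀ a, f a ∈ S) ∧ ∀ a b, B a b ↔ A (f a) (f b) := by
  obtain ⟨f, hf, hB⟩ := h
  exact ⟨fun a => f a, Subtype.val_injective.comp hf, fun a => (f a).2, hB⟩

/-- Being free of an induced copy passes to induced subdigraphs. -/
lemma not_hasInducedCopy_subtype {V W : Type} {A : V → V → Prop} {B : W → W → Prop} (S : Set V)
    (h : ¬ HasInducedCopy A B) : ¬ HasInducedCopy (fun a b : S => A a b) B := by
  intro hS
  obtain ⟨f, hf, -, hB⟩ := hasInducedCopy_subtype hS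
  exact h ⟨f, hf, hB⟩

/-- Copies of `H1` and `H2` with all arcs from the first to the second form a copy of
`H1 ⇒ H2`. -/
lemma hasInducedCopy_seqJoin {V W1 W2 : Type} {A : V → V → Prop} (hA : IsOriented A)
    {H1 : W1 → W1 → Prop} {H2 : W2 → W2 → Prop} {f : W1 → V} {g : W2 → V}
    (hf : Function.Injective f) (hg : Function.Injective g)
    (hfA : ∀ a b, H1 a b ↔ A (f a) (f b)) (hgA : ∀ a b, H2 a b ↔ A (g a) (g b))
    (hfg : ∀ a b, A (f a) (g b)) : HasInducedCopy A (seqJoin H1 H2) := by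
  refine ⟨Sum.elim f g, hf.sumElim hg fun a b hab => ?_, ?_⟩
  · have := hfg a b
    rw [hab] at this
    exact hA _ _ this this
  · rintro (a | a) (b | b)
    · exact hfA a b
    · exact iff_of_true trivial (hfg a b)
    · exact iff_of_false id (hA _ _ (hfg b a))
    · exact hgA a b

theorem stmt5 {W1 W2 W3 : Type} [Fintype W1] [Fintype W2] [Fintype W3]
    (H1 : W1 → W1 → Prop) (H2 : W2 → W2 → Prop) (F : W3 → W3 → Prop)
    (hjoin : ∃ c : ℕ, ∀ (V : Type) [Fintype V] (A : V → V → Prop), IsOriented A →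
      ¬ HasInducedCopy A F → ¬ HasInducedCopy A (seqJoin H1 H2) → dichrom A ≤ c)
    (h1 : ∃ c : ℕ, ∀ (V : Type) [Fintype V] (A : V → V → Prop), IsOriented A →
      ¬ HasInducedCopy A (addIsolated F) → ¬ HasInducedCopy A H1 → dichrom A ≤ c)
    (h2 : ∃ c : ℕ, ∀ (V : Type) [Fintype V] (A : V → V → Prop), IsOriented A →
      ¬ HasInducedCopy A (addIsolated F) → ¬ HasInducedCopy A H2 → dichrom A ≤ c) :
    ∃ c : ℕ, ∀ (V : Type) [Fintype V] (A : V → V → Prop), IsOriented A →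
      ¬ HasInducedCopy A (addIsolated F) → ¬ HasInducedCopy A (seqJoin H1 H2) →
      dichrom A ≤ c := by
  classical
  obtain ⟨c0, h0⟩ := hjoin
  obtain ⟨c1, h1⟩ := h1
  obtain ⟨c2, h2⟩ := h2
  -- The extra colour accounts for `v` itself, which belongs to its non-neighbourhood.
  set c := c0 + c1 + c2 + 1 with hc
  obtain ⟨b, hb⟩ := Setting.bounded c (Fintype.card W1) (Fintype.card W2)
  refine ⟨b, fun V _ A hA hF hJ => dichrom_le_of_col (hb V A ?_)⟩
  have hsub : ∀ S : Set V, IsOriented (fun a b : S => A a b) := fun S u v => hA u v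
  have e1 : ∀ S : Set V, ¬ Col A S c → HasInducedCopy (fun a b : S => A a b) H1 := by
    intro S hS
    by_contra hn
    exact hS ((col_of_dichrom_le hA (h1 S _ (hsub S) (not_hasInducedCopy_subtype S hF) hn)).mono
      subset_rfl (by omega))
  have e2 : ∀ S : Set V, ¬ Col A S c → HasInducedCopy (fun a b : S => A a b) H2 := by
    intro S hS
    by_contra hn
    exact hS ((col_of_dichrom_le hA (h2 S _ (hsub S) (not_hasInducedCopy_subtype S hF) hn)).mono
      subset_rfl (by omega))
  refine ⟨hA, fun v => ?_, fun S hS => ?_, fun S hS => ?_⟩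
  · have hS : Col A {w | (¬ A v w ∧ ¬ A w v) ∧ w ≠ v} c0 := by
      refine col_of_dichrom_le hA (h0 _ _ (hsub _) ?_ (not_hasInducedCopy_subtype _ hJ))
      intro hn
      obtain ⟨f, hf, hfS, hfA⟩ := hasInducedCopy_subtype hn
      refine hF ⟨fun o => o.elim v f, ?_, ?_⟩
      · rintro (_ | a) (_ | b) hab
        · rfl
        · exact absurd hab.symm (hfS b).2
        · exact absurd hab (hfS a).2
        · exact congrArg some (hf hab)
      · rintro (_ | a) (_ | b)
        · exact iff_of_false id fun h => hA _ _ h h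
        · exact iff_of_false id (hfS b).1.1
        · exact iff_of_false id (hfS a).1.2
        · exact hfA a b
    refine (hS.union (Col.singleton hA v)).mono ?_ (by omega)
    intro w hw
    by_cases hwv : w = v
    · exact Or.inr hwv
    · exact Or.inl ⟨hw, hwv⟩
  · obtain ⟨f, hf, hfS, hfA⟩ := hasInducedCopy_subtype (e1 S hS)
    refine ⟨Finset.univ.image f, Finset.card_image_le, ?_, ?_⟩
    · intro x hx
      obtain ⟨a, -, rfl⟩ := Finset.mem_image.1 hx
      exact hfS a
    · by_contra hn
      obtain ⟨g, hg, hgS, hgA⟩ := hasInducedCopy_subtype (e2 _ hn)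
      exact hJ (hasInducedCopy_seqJoin hA hf hg hfA hgA fun a b =>
        hgS b _ (Finset.mem_image_of_mem f (Finset.mem_univ a)))
  · obtain ⟨g, hg, hgS, hgA⟩ := hasInducedCopy_subtype (e2 S hS)
    refine ⟨Finset.univ.image g, Finset.card_image_le, ?_, ?_⟩
    · intro x hx
      obtain ⟨a, -, rfl⟩ := Finset.mem_image.1 hx
      exact hgS a
    · by_contra hn
      obtain ⟨f, hf, hfS, hfA⟩ := hasInducedCopy_subtype (e1 _ hn)
      exact hJ (hasInducedCopy_seqJoin hA hf hg hfA hgA fun a b =>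
        hfS a _ (Finset.mem_image_of_mem g (Finset.mem_univ b)))
end
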